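/- arXiv:1907.04930 — 2 statements merged into one kernel-verified Lean document; each statement's English description precedes it below -/
import Mathlib

section
/- Let r > k ≥ 2 be fixed integers. Then liminf_{n→∞} f_r(n, 3r-2k, 3)/n^k ≥ 1/(r^k - r). More precisely, there exist a constant a and δ ≤ 0.525 such that for every n ≥ 1, there is a G_r(3r-2k,3)-free r-uniform hypergraph on n vertices with at least n^k/(r^k - r) - a·n^{k-1+δ} edges, in which any two distinct edges intersect in at most k-1 vertices. -/
open Finset Filter

/-- `sparseTuranNumber n r v e` is `f_r(n,v,e)`. -/
noncomputable def sparseTuranNumber (n r v e : ℕ) : ℕ :=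
  sSup {m | ∃ H : Finset (Finset (Fin n)),
    (∀ A ∈ H, A.card = r) ∧
    (∀ S ⊆ H, S.card = e → v + 1 ≤ (S.sup id).card) ∧
    H.card = m}


/-- coefficient of the first block -/
def rowAl (s : Fin 3) : ℤ := if s = 1 then 0 else 1
/-- coefficient of the second block -/
def rowBe (s : Fin 3) : ℤ := if s = 0 then 0 else 1

/-- the square system attached to a pattern `p` -/
def patMat {r k : ℕ} {R : Type*} [CommRing R] (G : Fin r → Fin k → R)
    (p : Fin k ⊕ Fin k → Fin r × Fin 3) : Matrix (Fin k ⊕ Fin k) (Fin k ⊕ Fin k) R :=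
  fun x y => Sum.elim (fun j => (rowAl (p x).2 : R) * G (p x).1 j)
    (fun j => (rowBe (p x).2 : R) * G (p x).1 j) y

theorem patMat_mulVec {r k : ℕ} {R : Type*} [CommRing R] (G : Fin r → Fin k → R)
    (p : Fin k ⊕ Fin k → Fin r × Fin 3) (w : Fin k ⊕ Fin k → R) (x : Fin k ⊕ Fin k) :
    (patMat G p).mulVec w x = (rowAl (p x).2 : R) * ∑ j, G (p x).1 j * w (Sum.inl j) +
      (rowBe (p x).2 : R) * ∑ j, G (p x).1 j * w (Sum.inr j) := by
  simp [patMat, Matrix.mulVec, dotProduct, Finset.mul_sum, mul_assoc]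

theorem patMat_map {r k : ℕ} {R S : Type*} [CommRing R] [CommRing S] (f : R →+* S)
    (G : Fin r → Fin k → R) (p : Fin k ⊕ Fin k → Fin r × Fin 3) :
    f (patMat G p).det = (patMat (fun i j => f (G i j)) p).det := by
  rw [RingHom.map_det]
  congr 1
  ext x y
  rcases y with j | j <;> simp [patMat]

theorem exists_generic (r k : ℕ) : ∃ (D : ℕ) (G : Fin r → Fin k → ℤ), 0 < D ∧
    ∀ p : Fin k ⊕ Fin k → Fin r × Fin 3,
      (∃ G₀ : Fin r → Fin k → ℤ, (patMat G₀ p).det ≠ 0) →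
      (patMat G p).det ∣ (D : ℤ) := by
  classical
  let dp : (Fin k ⊕ Fin k → Fin r × Fin 3) → MvPolynomial (Fin r × Fin k) ℤ :=
    fun p => (patMat (fun i j => MvPolynomial.X (i, j)) p).det
  have hev : ∀ (G : Fin r × Fin k → ℤ) p,
      MvPolynomial.eval G (dp p) = (patMat (fun i j => G (i, j)) p).det := by
    intro G p
    simp only [dp]
    rw [patMat_map]
    simp
  let Q := ∏ p ∈ univ.filter (fun p => dp p ≠ 0), dp p
  have hQ : Q ≠ 0 := by
    simp only [Q, Finset.prod_ne_zero_iff]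
    intro p hp
    simpa using hp
  obtain ⟨G, hG⟩ : ∃ G, MvPolynomial.eval G Q ≠ 0 := by
    by_contra h
    push Not at h
    exact hQ (MvPolynomial.funext (by simpa using h))
  refine ⟨(MvPolynomial.eval G Q).natAbs, fun i j => G (i, j), Int.natAbs_pos.2 hG, ?_⟩
  rintro p ⟨G₀, h0⟩
  rw [Int.dvd_natAbs, ← hev]
  apply map_dvd
  apply Finset.dvd_prod_of_mem
  simp only [mem_filter, mem_univ, true_and]
  intro h
  apply h0
  have := hev (fun x => G₀ x.1 x.2) p
  rw [h] at this
  simpa using this.symm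

theorem exists_surj_nat {α : Type*} [DecidableEq α] (A : Finset α) :
    ∃ f : α → ℕ, ∀ j < A.card, ∃ x ∈ A, f x = j := by
  refine ⟨fun x => if h : x ∈ A then (A.equivFin ⟨x, h⟩ : ℕ) else 0, fun j hj => ?_⟩
  refine ⟨(A.equivFin.symm ⟨j, hj⟩ : A), (A.equivFin.symm ⟨j, hj⟩).2, ?_⟩
  simp

theorem exists_idx {r k : ℕ} (Z₁ Z₂ Z₃ T : Finset (Fin r))
    (h12 : Z₁ ∩ Z₂ = T) (h13 : Z₁ ∩ Z₃ = T) (h23 : Z₂ ∩ Z₃ = T)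
    (c1 : Z₁.card ≤ k) (c2 : Z₂.card ≤ k) (c3 : Z₃.card ≤ k)
    (hc : 2 * k + T.card ≤ Z₁.card + Z₂.card + Z₃.card) :
    ∃ idx : Fin r → ℕ, ∀ j < k,
      (∃ x ∈ Z₁, ∃ y ∈ Z₂, idx x = j ∧ idx y = j) ∨
      (∃ x ∈ Z₁, ∃ y ∈ Z₃, idx x = j ∧ idx y = j) ∨
      (∃ x ∈ Z₂, ∃ y ∈ Z₃, idx x = j ∧ idx y = j) := by
  classical
  have s1 : T ⊆ Z₁ := h12 ▸ inter_subset_left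
  have s2 : T ⊆ Z₂ := h12 ▸ inter_subset_right
  have s3 : T ⊆ Z₃ := h13 ▸ inter_subset_right
  have a1 := card_sdiff_add_card_eq_card s1
  have a2 := card_sdiff_add_card_eq_card s2
  have a3 := card_sdiff_add_card_eq_card s3
  obtain ⟨fT, hT⟩ := exists_surj_nat T
  obtain ⟨f1, hf1⟩ := exists_surj_nat (Z₁ \ T)
  obtain ⟨f2, hf2⟩ := exists_surj_nat (Z₂ \ T)
  obtain ⟨f3, hf3⟩ := exists_surj_nat (Z₃ \ T)
  set a := (Z₁ \ T).card
  set b := (Z₂ \ T).card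
  set c := (Z₃ \ T).card
  set t := T.card
  let md : ℕ → ℕ := fun s => if s < k - t then t + s else t + (s - (k - t))
  let idx : Fin r → ℕ := fun x => if x ∈ T then fT x else
    if x ∈ Z₁ then md (f1 x) else if x ∈ Z₂ then md (a + f2 x) else md (a + b + f3 x)
  have i1 : ∀ s < a, ∃ x ∈ Z₁, idx x = md s := by
    intro s hs
    obtain ⟨x, hx, rfl⟩ := hf1 s hs
    rw [Finset.mem_sdiff] at hx
    exact ⟨x, hx.1, by simp [idx, hx]⟩
  have i2 : ∀ s, a ≤ s → s < a + b → ∃ x ∈ Z₂, idx x = md s := by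
    intro s hs hs'
    obtain ⟨x, hx, hxs⟩ := hf2 (s - a) (by omega)
    rw [Finset.mem_sdiff] at hx
    have : x ∉ Z₁ := fun h => hx.2 (h12 ▸ mem_inter.2 ⟨h, hx.1⟩)
    exact ⟨x, hx.1, by simp only [idx, hx, this, if_false, if_true, hxs]; congr 1; omega⟩
  have i3 : ∀ s, a + b ≤ s → s < a + b + c → ∃ x ∈ Z₃, idx x = md s := by
    intro s hs hs'
    obtain ⟨x, hx, hxs⟩ := hf3 (s - (a + b)) (by omega)
    rw [Finset.mem_sdiff] at hx
    have h1 : x ∉ Z₁ := fun h => hx.2 (h13 ▸ mem_inter.2 ⟨h, hx.1⟩)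
    have h2 : x ∉ Z₂ := fun h => hx.2 (h23 ▸ mem_inter.2 ⟨h, hx.1⟩)
    exact ⟨x, hx.1, by simp only [idx, hx, h1, h2, if_false, hxs]; congr 1; omega⟩
  refine ⟨idx, fun j hj => ?_⟩
  by_cases hjt : j < t
  · obtain ⟨x, hx, hxj⟩ := hT j hjt
    left
    exact ⟨x, s1 hx, x, s2 hx, by simp [idx, hx, hxj], by simp [idx, hx, hxj]⟩
  have m1 : md (j - t) = j := by simp only [md]; split_ifs <;> omega
  have m2 : md (j - t + (k - t)) = j := by simp only [md]; split_ifs <;> omega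
  rcases lt_or_ge (j - t) a with u | u
  · obtain ⟨x, hx, hxj⟩ := i1 _ u
    rcases lt_or_ge (j - t + (k - t)) (a + b) with w | w
    · obtain ⟨y, hy, hyj⟩ := i2 (j - t + (k - t)) (by omega) w
      left; exact ⟨x, hx, y, hy, by omega, by omega⟩
    · obtain ⟨y, hy, hyj⟩ := i3 (j - t + (k - t)) (by omega) (by omega)
      right; left; exact ⟨x, hx, y, hy, by omega, by omega⟩
  · obtain ⟨x, hx, hxj⟩ := i2 (j - t) u (by omega)
    obtain ⟨y, hy, hyj⟩ := i3 (j - t + (k - t)) (by omega) (by omega)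
    right; right; exact ⟨x, hx, y, hy, by omega, by omega⟩

theorem exists_code (r k : ℕ) : ∃ (D : ℕ) (G : Fin r → Fin k → ℤ), 0 < D ∧
    ∀ (R : Type) [CommRing R], IsUnit (D : R) → ∀ u v : Fin k → R,
    ∀ Z₁ Z₂ Z₃ T : Finset (Fin r), Z₁ ∩ Z₂ = T → Z₁ ∩ Z₃ = T → Z₂ ∩ Z₃ = T →
    Z₁.card ≤ k → Z₂.card ≤ k → Z₃.card ≤ k →
    2 * k + T.card ≤ Z₁.card + Z₂.card + Z₃.card →
    (∀ i ∈ Z₁, ∑ j, (G i j : R) * u j = 0) →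
    (∀ i ∈ Z₂, ∑ j, (G i j : R) * v j = 0) →
    (∀ i ∈ Z₃, ∑ j, (G i j : R) * u j + ∑ j, (G i j : R) * v j = 0) → u = 0 := by
  classical
  obtain ⟨D, G, hD, hG⟩ := exists_generic r k
  refine ⟨D, G, hD, ?_⟩
  intro R _ hu u v Z₁ Z₂ Z₃ T h12 h13 h23 c1 c2 c3 hc z1 z2 z3
  obtain ⟨idx, hidx⟩ := exists_idx Z₁ Z₂ Z₃ T h12 h13 h23 c1 c2 c3 hc
  -- the two rows for each coordinate
  have key : ∀ j : Fin k, ∃ q : (Fin r × Fin 3) × (Fin r × Fin 3),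
      (idx q.1.1 = j ∧ idx q.2.1 = j ∧ q.1.2 ≠ q.2.2) ∧
      ((rowAl q.1.2 : R) * ∑ l, (G q.1.1 l : R) * u l +
        (rowBe q.1.2 : R) * ∑ l, (G q.1.1 l : R) * v l = 0) ∧
      ((rowAl q.2.2 : R) * ∑ l, (G q.2.1 l : R) * u l +
        (rowBe q.2.2 : R) * ∑ l, (G q.2.1 l : R) * v l = 0) := by
    intro j
    rcases hidx j j.2 with ⟨x, hx, y, hy, e1, e2⟩ | ⟨x, hx, y, hy, e1, e2⟩ |
      ⟨x, hx, y, hy, e1, e2⟩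
    · exact ⟨((x, 0), (y, 1)), ⟨e1, e2, by simp⟩, by simp [rowAl, rowBe, z1 x hx],
        by simp [rowAl, rowBe, z2 y hy]⟩
    · exact ⟨((x, 0), (y, 2)), ⟨e1, e2, by simp⟩, by simp [rowAl, rowBe, z1 x hx],
        by simp [rowAl, rowBe, z3 y hy]⟩
    · exact ⟨((x, 1), (y, 2)), ⟨e1, e2, by simp⟩, by simp [rowAl, rowBe, z2 x hx],
        by simp [rowAl, rowBe, z3 y hy]⟩
  choose q hq using key
  let p : Fin k ⊕ Fin k → Fin r × Fin 3 := Sum.elim (fun j => (q j).1) (fun j => (q j).2)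
  have hdvd := hG p ⟨fun i l => if idx i = l then 1 else 0, by
    intro hdet
    obtain ⟨w, hw0, hw⟩ := Matrix.exists_mulVec_eq_zero_iff.2 hdet
    apply hw0
    have A : ∀ j : Fin k, w (Sum.inl j) = 0 ∧ w (Sum.inr j) = 0 := by
      intro j
      have e1 := congrFun hw (Sum.inl j)
      have e2 := congrFun hw (Sum.inr j)
      rw [patMat_mulVec] at e1 e2
      obtain ⟨⟨i1, i2, hne⟩, -, -⟩ := hq j
      have hs : ∀ f : Fin k → ℤ, ∑ l : Fin k, (if (j : ℕ) = l then (1 : ℤ) else 0) * f l = f j := by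
        intro f
        simp [← Fin.ext_iff]
      simp only [p, Sum.elim_inl, Sum.elim_inr, i1, i2, hs, Pi.zero_apply] at e1 e2
      generalize (q j).1.2 = s1 at *
      generalize (q j).2.2 = s2 at *
      fin_cases s1 <;> fin_cases s2 <;> simp [rowAl, rowBe] at e1 e2 hne ⊢ <;> omega
    funext x
    rcases x with j | j
    · exact (A j).1
    · exact (A j).2⟩
  have hunit : IsUnit (patMat (fun i j => (G i j : R)) p).det := by
    have h1 := patMat_map (Int.castRingHom R) G p
    simp only [eq_intCast] at h1
    rw [← h1]
    refine isUnit_of_dvd_unit ?_ hu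
    have := map_dvd (Int.castRingHom R) hdvd
    simpa using this
  have hz : (patMat (fun i j => (G i j : R)) p).mulVec (Sum.elim u v) = 0 := by
    funext x
    rw [patMat_mulVec]
    rcases x with j | j
    · exact (hq j).2.1
    · exact (hq j).2.2
  have : Sum.elim u v = 0 := by
    have hinj := Matrix.mulVec_injective_of_isUnit
      ((Matrix.isUnit_iff_isUnit_det _).2 hunit)
    apply hinj
    rw [hz, Matrix.mulVec_zero]
  funext j
  exact congrFun this (Sum.inl j)

/-- the three properties of the hypergraphs we construct -/
def GoodH (r k : ℕ) {α : Type*} [DecidableEq α] (H : Finset (Finset α)) : Prop :=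
  (∀ A ∈ H, A.card = r) ∧
  (∀ A ∈ H, ∀ B ∈ H, ∀ C ∈ H, A ≠ B → A ≠ C → B ≠ C →
    3 * r - 2 * k + 1 ≤ (A ∪ B ∪ C).card) ∧
  (∀ A ∈ H, ∀ B ∈ H, A ≠ B → (A ∩ B).card ≤ k - 1)

theorem GoodH.map {r k : ℕ} {α β : Type*} [DecidableEq α] [DecidableEq β]
    {H : Finset (Finset α)} (h : GoodH r k H) (e : α ↪ β) :
    GoodH r k (H.map (Finset.mapEmbedding e).toEmbedding) := by
  obtain ⟨h1, h2, h3⟩ := h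
  refine ⟨?_, ?_, ?_⟩
  · intro A hA
    obtain ⟨A, hA', rfl⟩ := Finset.mem_map.1 hA
    simpa using h1 A hA'
  · intro A hA B hB C hC
    obtain ⟨A, hA', rfl⟩ := Finset.mem_map.1 hA
    obtain ⟨B, hB', rfl⟩ := Finset.mem_map.1 hB
    obtain ⟨C, hC', rfl⟩ := Finset.mem_map.1 hC
    intro n1 n2 n3
    have := h2 A hA' B hB' C hC' (by rintro rfl; exact n1 rfl) (by rintro rfl; exact n2 rfl)
      (by rintro rfl; exact n3 rfl)
    simpa [← Finset.map_union] using this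
  · intro A hA B hB
    obtain ⟨A, hA', rfl⟩ := Finset.mem_map.1 hA
    obtain ⟨B, hB', rfl⟩ := Finset.mem_map.1 hB
    intro n1
    have := h3 A hA' B hB' (by rintro rfl; exact n1 rfl)
    simpa [← Finset.map_inter] using this

theorem card_three {α : Type*} [DecidableEq α] (A B C : Finset α) :
    (A ∪ B ∪ C).card + (A ∩ B).card + (A ∩ C).card + (B ∩ C).card =
      A.card + B.card + C.card + (A ∩ B ∩ C).card := by
  have e1 := card_union_add_card_inter A B
  have e2 := card_union_add_card_inter (A ∪ B) C
  have e3 := card_union_add_card_inter (A ∩ C) (B ∩ C)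
  rw [← union_inter_distrib_right] at e3
  have : A ∩ C ∩ (B ∩ C) = A ∩ B ∩ C := by
    ext x; simp only [mem_inter]; tauto
  rw [this] at e3
  omega

/-- transversal edge of a function -/
def graphEdge {r : ℕ} {R : Type*} [DecidableEq R] (f : Fin r → R) : Finset (Fin r × R) :=
  univ.image (fun i => (i, f i))

theorem mem_graphEdge {r : ℕ} {R : Type*} [DecidableEq R] (f : Fin r → R) (x : Fin r × R) :
    x ∈ graphEdge f ↔ f x.1 = x.2 := by
  simp only [graphEdge, Finset.mem_image, mem_univ, true_and]
  constructor
  · rintro ⟨i, rfl⟩; rfl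
  · intro h; exact ⟨x.1, by rw [h]⟩

theorem card_graphEdge_filter {r : ℕ} {R : Type*} [DecidableEq R] (f : Fin r → R)
    (S : Finset (Fin r × R)) :
    (graphEdge f ∩ S).card = (univ.filter (fun i => (i, f i) ∈ S)).card := by
  have : graphEdge f ∩ S = (univ.filter (fun i => (i, f i) ∈ S)).image (fun i => (i, f i)) := by
    ext ⟨i, y⟩
    simp only [mem_inter, mem_graphEdge, Finset.mem_image, mem_filter, mem_univ, true_and,
      Prod.mk.injEq]
    constructor
    · rintro ⟨rfl, h⟩; exact ⟨i, h, rfl, rfl⟩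
    · rintro ⟨_, h, rfl, rfl⟩; exact ⟨rfl, h⟩
  rw [this, card_image_of_injective]
  intro i j h
  exact (Prod.mk.inj h).1

theorem card_graphEdge {r : ℕ} {R : Type*} [DecidableEq R] (f : Fin r → R) :
    (graphEdge f).card = r := by
  have := card_graphEdge_filter f (graphEdge f)
  simpa [mem_graphEdge] using this

theorem build_step {r k : ℕ} (hk : 2 ≤ k) (hrk : k < r) {R : Type} [CommRing R] [Fintype R]
    [DecidableEq R] (G : Fin r → Fin k → ℤ)
    (hG : ∀ u v : Fin k → R,
      ∀ Z₁ Z₂ Z₃ T : Finset (Fin r), Z₁ ∩ Z₂ = T → Z₁ ∩ Z₃ = T → Z₂ ∩ Z₃ = T →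
      Z₁.card ≤ k → Z₂.card ≤ k → Z₃.card ≤ k →
      2 * k + T.card ≤ Z₁.card + Z₂.card + Z₃.card →
      (∀ i ∈ Z₁, ∑ j, (G i j : R) * u j = 0) →
      (∀ i ∈ Z₂, ∑ j, (G i j : R) * v j = 0) →
      (∀ i ∈ Z₃, ∑ j, (G i j : R) * u j + ∑ j, (G i j : R) * v j = 0) → u = 0)
    (H' : Finset (Finset R)) (hH' : GoodH r k H') :
    ∃ H : Finset (Finset (Fin r × R)), GoodH r k H ∧
      H.card = (Fintype.card R) ^ k + r * H'.card := by
  classical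
  obtain ⟨g1, g2, g3⟩ := hH'
  let cw : (Fin k → R) → Fin r → R := fun w i => ∑ j, (G i j : R) * w j
  have cw_sub : ∀ x y i, cw (x - y) i = cw x i - cw y i := by
    intro x y i; simp [cw, mul_sub, Finset.sum_sub_distrib]
  let Z : (Fin k → R) → (Fin k → R) → Finset (Fin r) := fun x y =>
    univ.filter (fun i => cw x i = cw y i)
  have hZ : ∀ x y, x ≠ y → (Z x y).card ≤ k - 1 := by
    intro x y hxy
    by_contra hcon
    obtain ⟨W, hW, hWk⟩ := Finset.exists_subset_card_eq (show k ≤ (Z x y).card by omega)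
    have h0 : ∀ i ∈ W, ∑ j, (G i j : R) * (x - y) j = 0 := by
      intro i hi
      have h1 := hW hi
      simp only [Z, mem_filter, mem_univ, true_and] at h1
      have h2 := cw_sub x y i
      rw [h1, sub_self] at h2
      exact h2
    have := hG (x - y) (x - y) W W W W (by simp) (by simp) (by simp) (by omega) (by omega)
      (by omega) (by omega) h0 h0 (fun i hi => by rw [h0 i hi, add_zero])
    exact hxy (sub_eq_zero.1 this)
  let edge : (Fin k → R) → Finset (Fin r × R) := fun w => graphEdge (cw w)
  have einter : ∀ x y, (edge x ∩ edge y).card = (Z x y).card := by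
    intro x y
    simp only [edge, Z]
    rw [card_graphEdge_filter]
    congr 1
    ext i
    simp [mem_graphEdge, eq_comm]
  have einter3 : ∀ x y z, (edge x ∩ edge y ∩ edge z).card = (Z x y ∩ Z x z).card := by
    intro x y z
    simp only [edge, Z]
    rw [inter_assoc, card_graphEdge_filter]
    congr 1
    ext i
    simp [mem_graphEdge, eq_comm]
  have ecard : ∀ x, (edge x).card = r := fun x => card_graphEdge _
  let inn : Fin r → Finset R → Finset (Fin r × R) := fun i A => A.image (fun y => (i, y))
  have inj_mk : ∀ i : Fin r, Function.Injective (fun y : R => (i, y)) := by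
    intro i a b h; exact (Prod.mk.inj h).2
  have mem_inn : ∀ i A x, x ∈ inn i A ↔ i = x.1 ∧ x.2 ∈ A := by
    intro i A ⟨a, b⟩
    simp only [inn, Finset.mem_image, Prod.mk.injEq]
    constructor
    · rintro ⟨c, h, rfl, rfl⟩; exact ⟨rfl, h⟩
    · rintro ⟨rfl, h⟩; exact ⟨b, h, rfl, rfl⟩
  have icard : ∀ i A, (inn i A).card = A.card := fun i A => card_image_of_injective _ (inj_mk i)
  have ti : ∀ x i A, (edge x ∩ inn i A).card ≤ 1 := by
    intro x i A
    rw [card_le_one]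
    rintro ⟨a1, a2⟩ ha ⟨b1, b2⟩ hb
    simp only [mem_inter, edge, mem_graphEdge, mem_inn] at ha hb
    obtain ⟨rfl, rfl, -⟩ := ha
    obtain ⟨rfl, h, -⟩ := hb
    subst h
    rfl
  have ii : ∀ i j A B, i ≠ j → (inn i A ∩ inn j B).card = 0 := by
    intro i j A B hij
    rw [card_eq_zero, eq_empty_iff_forall_notMem]
    rintro ⟨a1, a2⟩ ha
    simp only [mem_inter, mem_inn] at ha
    exact hij (ha.1.1.trans ha.2.1.symm)
  have iinter : ∀ i A B, (inn i A ∩ inn i B).card = (A ∩ B).card := by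
    intro i A B
    rw [← icard i (A ∩ B)]
    simp only [inn]
    rw [image_inter _ _ (inj_mk i)]
  have iunion : ∀ i A B C, (inn i A ∪ inn i B ∪ inn i C).card = (A ∪ B ∪ C).card := by
    intro i A B C
    rw [← icard i (A ∪ B ∪ C)]
    simp only [inn, image_union]
  let H := univ.image edge ∪ ((univ : Finset (Fin r)) ×ˢ H').image (fun q => inn q.1 q.2)
  have memH : ∀ A ∈ H, (∃ x, A = edge x) ∨ ∃ i, ∃ B ∈ H', A = inn i B := by
    intro A hA
    simp only [H, Finset.mem_union, Finset.mem_image, mem_univ, true_and, mem_product] at hA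
    rcases hA with ⟨x, rfl⟩ | ⟨⟨i, B⟩, h, rfl⟩
    · exact Or.inl ⟨x, rfl⟩
    · exact Or.inr ⟨i, B, h, rfl⟩
  have hcardr : ∀ A ∈ H, A.card = r := by
    intro A hA
    rcases memH A hA with ⟨x, rfl⟩ | ⟨i, B, hB, rfl⟩
    · exact ecard x
    · rw [icard]; exact g1 B hB
  have hpair : ∀ A ∈ H, ∀ B ∈ H, A ≠ B → (A ∩ B).card ≤ k - 1 := by
    intro A hA B hB hAB
    rcases memH A hA with ⟨x, rfl⟩ | ⟨i, A, hA', rfl⟩ <;>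
    rcases memH B hB with ⟨y, rfl⟩ | ⟨j, B, hB', rfl⟩
    · rw [einter]; exact hZ x y (by rintro rfl; exact hAB rfl)
    · have := ti x j B; omega
    · have := ti y i A; rw [inter_comm]; omega
    · by_cases hij : i = j
      · subst hij
        rw [iinter]; exact g3 A hA' B hB' (by rintro rfl; exact hAB rfl)
      · rw [ii i j A B hij]; omega
  refine ⟨H, ⟨hcardr, ?_, hpair⟩, ?_⟩
  · intro A hA B hB C hC nAB nAC nBC
    have c3 := card_three A B C
    have rA := hcardr A hA
    have rB := hcardr B hB
    have rC := hcardr C hC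
    have pAB := hpair A hA B hB nAB
    have pAC := hpair A hA C hC nAC
    have pBC := hpair B hB C hC nBC
    rcases memH A hA with ⟨x, rfl⟩ | ⟨i, A, hA', rfl⟩ <;>
    rcases memH B hB with ⟨y, rfl⟩ | ⟨j, B, hB', rfl⟩ <;>
    rcases memH C hC with ⟨z, rfl⟩ | ⟨l, C, hC', rfl⟩
    · by_contra hcon
      rw [einter] at pAB pAC pBC
      rw [einter, einter, einter, einter3] at c3
      have hh : ∀ a b i, i ∈ Z a b → cw (a - b) i = 0 := by
        intro a b i hi
        rw [cw_sub]
        simp only [Z, mem_filter, mem_univ, true_and] at hi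
        rw [hi, sub_self]
      have := hG (x - y) (y - z) (Z x y) (Z y z) (Z x z) (Z x y ∩ Z x z) (by
          ext i
          simp only [Z, mem_inter, mem_filter, mem_univ, true_and]
          constructor
          · rintro ⟨h1, h2⟩; exact ⟨h1, h1.trans h2⟩
          · rintro ⟨h1, h2⟩; exact ⟨h1, h1.symm.trans h2⟩) rfl (by
          ext i
          simp only [Z, mem_inter, mem_filter, mem_univ, true_and]
          constructor
          · rintro ⟨h1, h2⟩; exact ⟨h2.trans h1.symm, h2⟩
          · rintro ⟨h1, h2⟩; exact ⟨h1.symm.trans h2, h2⟩) (by omega) (by omega) (by omega)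
          (by omega) (hh x y) (hh y z) (by
          intro i hi
          have h1 := cw_sub x y i
          have h2 := cw_sub y z i
          simp only [Z, mem_filter, mem_univ, true_and] at hi
          change cw (x - y) i + cw (y - z) i = 0
          rw [h1, h2, hi]; ring)
      exact nAB (by rw [sub_eq_zero.1 this])
    · have q1 := ti x l C
      have q2 := ti y l C
      omega
    · have q1 := ti x j B
      have q2 := ti z j B
      rw [inter_comm] at q2
      omega
    · have q1 := ti x j B
      have q2 := ti x l C
      omega
    · have q1 := ti y i A
      have q2 := ti z i A
      rw [inter_comm] at q1 q2
      omega
    · have q1 := ti y i A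
      have q2 := ti y l C
      rw [inter_comm] at q1
      omega
    · have q1 := ti z i A
      have q2 := ti z j B
      rw [inter_comm] at q1 q2
      omega
    · by_cases hij : i = j
      · subst hij
        by_cases hil : i = l
        · subst hil
          rw [iunion]
          exact g2 A hA' B hB' C hC' (by rintro rfl; exact nAB rfl)
            (by rintro rfl; exact nAC rfl) (by rintro rfl; exact nBC rfl)
        · have q1 := ii i l A C hil
          have q2 := ii i l B C hil
          omega
      · have q1 := ii i j A B hij
        by_cases hil : i = l
        · subst hil
          have q2 := ii j i B C (Ne.symm hij)
          omega
        · have q2 := ii i l A C hil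
          omega
  · have hdisj : Disjoint (univ.image edge)
        (((univ : Finset (Fin r)) ×ˢ H').image (fun q => inn q.1 q.2)) := by
      rw [Finset.disjoint_left]
      intro A h1 h2
      simp only [Finset.mem_image, mem_univ, true_and, mem_product] at h1 h2
      obtain ⟨x, rfl⟩ := h1
      obtain ⟨⟨i, B⟩, hB, he⟩ := h2
      have q := ti x i B
      simp only at he
      rw [he, inter_self, ecard] at q
      omega
    have einj : Function.Injective edge := by
      intro x y hxy
      by_contra hne
      have h1 := hZ x y hne
      rw [← einter, ← hxy, inter_self, ecard] at h1
      omega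
    have iinj : Set.InjOn (fun q : Fin r × Finset R => inn q.1 q.2)
        (((univ : Finset (Fin r)) ×ˢ H' : Finset _) : Set (Fin r × Finset R)) := by
      rintro ⟨i, A⟩ hA ⟨j, B⟩ hB h
      simp only [Finset.coe_product, Set.mem_prod, Finset.mem_coe, mem_univ, true_and] at hA hB h
      have hij : i = j := by
        by_contra hij
        have q := ii i j A B hij
        rw [← h, inter_self, icard, g1 A hA] at q
        omega
      subst hij
      have : A = B := Finset.image_injective (inj_mk i) h
      rw [this]
    simp only [H]
    rw [card_union_of_disjoint hdisj, card_image_of_injective _ einj, card_image_of_injOn iinj,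
      card_product]
    simp

theorem build_fin {r k : ℕ} (hk : 2 ≤ k) (hrk : k < r) : ∃ D : ℕ, 0 < D ∧
    ∀ n m : ℕ, 0 < m → m.Coprime D → r * m ≤ n → ∀ H' : Finset (Finset (Fin m)), GoodH r k H' →
    ∃ H : Finset (Finset (Fin n)), GoodH r k H ∧ H.card = m ^ k + r * H'.card := by
  classical
  obtain ⟨D, G, hD, hG⟩ := exists_code r k
  refine ⟨D, hD, ?_⟩
  intro n m hm hmD hn H' hH'
  have : NeZero m := ⟨hm.ne'⟩
  have hcm : Fintype.card (ZMod m) = m := ZMod.card m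
  let e : Fin m ≃ ZMod m := Fintype.equivOfCardEq (by simp)
  obtain ⟨H, hH, hc⟩ := build_step hk hrk (R := ZMod m) G
    (hG (ZMod m) ((ZMod.isUnit_iff_coprime D m).2 hmD.symm)) _ (hH'.map e.toEmbedding)
  have hcard : Fintype.card (Fin r × ZMod m) ≤ Fintype.card (Fin n) := by
    simpa using hn
  obtain ⟨f⟩ := Function.Embedding.nonempty_of_card_le hcard
  refine ⟨_, hH.map f, ?_⟩
  rw [card_map, hc, card_map, hcm]

theorem exists_coprime_near (r D n : ℕ) (hr : 0 < r) (hD : 0 < D) (hn : r ≤ n) :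
    ∃ m : ℕ, 0 < m ∧ m.Coprime D ∧ r * m ≤ n ∧ n ≤ r * m + r * (D + 1) := by
  have h1 : 1 ≤ n / r := (Nat.one_le_div_iff hr).2 hn
  have e1 := Nat.div_add_mod n r
  have l1 := Nat.mod_lt n hr
  have e2 := Nat.div_add_mod (n / r - 1) D
  have l2 := Nat.mod_lt (n / r - 1) hD
  refine ⟨D * ((n / r - 1) / D) + 1, by omega, ?_, ?_, ?_⟩
  · simp
  · calc _ ≤ r * (n / r) := Nat.mul_le_mul_left _ (by omega)
      _ ≤ n := by omega
  · rw [← Nat.mul_add]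
    calc n ≤ r * (n / r + 1) := by rw [Nat.mul_add]; omega
      _ ≤ _ := Nat.mul_le_mul_left _ (by omega)

theorem pow_sub_le (n y K : ℝ) (k : ℕ) (hy : 0 ≤ y) (hn : 0 < n) (hyn : n ≤ y + K) (hK : 0 ≤ K) :
    n ^ (k + 1) - (k + 1) * K * n ^ k ≤ y ^ (k + 1) := by
  have h1 : n - K ≤ y := by linarith
  rcases le_or_gt (n - K) 0 with h | h
  · have : n ^ (k + 1) - (k + 1) * K * n ^ k ≤ 0 := by
      have : n ^ (k + 1) ≤ (k + 1) * K * n ^ k := by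
        rw [pow_succ, mul_comm]
        apply mul_le_mul_of_nonneg_right _ (by positivity)
        nlinarith [(Nat.cast_nonneg k : (0 : ℝ) ≤ k)]
      linarith
    exact this.trans (by positivity)
  · have hb := one_add_mul_le_pow (a := -K / n) (by
      rw [le_div_iff₀ hn]; linarith) (k + 1)
    have h2 : n ^ (k + 1) * (1 + ((k + 1 : ℕ) : ℝ) * (-K / n)) ≤
        n ^ (k + 1) * (1 + -K / n) ^ (k + 1) := mul_le_mul_of_nonneg_left hb (by positivity)
    rw [← mul_pow] at h2
    have h3 : n * (1 + -K / n) = n - K := by field_simp; ring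
    rw [h3] at h2
    have h4 : n ^ (k + 1) * (1 + ((k + 1 : ℕ) : ℝ) * (-K / n)) =
        n ^ (k + 1) - (k + 1) * K * n ^ k := by
      push_cast; field_simp; ring
    rw [h4] at h2
    exact h2.trans (pow_le_pow_left₀ h.le h1 _)

theorem quantitative {r k : ℕ} (hk : 2 ≤ k) (hrk : k < r) :
    ∃ a : ℝ, 0 ≤ a ∧ ∀ n : ℕ, ∃ H : Finset (Finset (Fin n)), GoodH r k H ∧
      (n : ℝ) ^ k / ((r : ℝ) ^ k - r) - a * (n : ℝ) ^ ((k : ℝ) - 1 + 1 / 2) ≤ H.card := by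
  obtain ⟨D, hD, hbuild⟩ := build_fin hk hrk
  have hr3 : (3 : ℝ) ≤ r := by exact_mod_cast (show 3 ≤ r by omega)
  have hk2 : (2 : ℝ) ≤ k := by exact_mod_cast hk
  have hr0 : (0 : ℝ) < r := by linarith
  set c : ℝ := (r : ℝ) ^ k - r with hc
  set s : ℝ := (k : ℝ) - 1 + 1 / 2 with hs
  have hcpos : 0 < c := by
    have : (r : ℝ) ^ 2 ≤ (r : ℝ) ^ k := pow_le_pow_right₀ (by linarith) hk
    nlinarith
  set ρ : ℝ := (r : ℝ) ^ (1 - s) with hρ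
  have hρ1 : ρ < 1 := Real.rpow_lt_one_of_one_lt_of_neg (by linarith) (by linarith)
  have hρ0 : 0 < ρ := Real.rpow_pos_of_pos hr0 _
  set K : ℝ := (r : ℝ) * (D + 1) with hK
  have hK0 : 0 ≤ K := by positivity
  obtain ⟨a, ha1, ha2⟩ : ∃ a : ℝ, k * K / c ≤ a * (1 - ρ) ∧ r / c ≤ a := by
    refine ⟨max (k * K / c / (1 - ρ)) (r / c), ?_, le_max_right _ _⟩
    rw [← div_le_iff₀ (by linarith)]
    exact le_max_left _ _
  have ha0 : 0 ≤ a := le_trans (by positivity) ha2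
  refine ⟨a, ha0, ?_⟩
  intro n
  induction n using Nat.strong_induction_on with
  | _ n ih =>
  have hempty : GoodH r k (∅ : Finset (Finset (Fin n))) := by
    refine ⟨?_, ?_, ?_⟩ <;> simp
  rcases Nat.eq_zero_or_pos n with h0 | hn0
  · refine ⟨∅, hempty, ?_⟩
    subst h0
    have : (0 : ℝ) ≤ a * ((0 : ℕ) : ℝ) ^ s := by positivity
    simp only [Nat.cast_zero, card_empty] at *
    rw [zero_pow (by omega)]
    simpa using this
  have hn1 : (1 : ℝ) ≤ n := by exact_mod_cast hn0
  have hns : (n : ℝ) ^ (k - 1) ≤ (n : ℝ) ^ s := by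
    rw [← Real.rpow_natCast]
    apply Real.rpow_le_rpow_of_exponent_le hn1
    rw [Nat.cast_sub (by omega)]
    push_cast
    linarith
  have hkk : k = (k - 1) + 1 := by omega
  rcases lt_or_ge n r with hnr | hnr
  · refine ⟨∅, hempty, ?_⟩
    have h1 : (n : ℝ) ^ k / c ≤ a * (n : ℝ) ^ s := by
      calc (n : ℝ) ^ k / c = n / c * (n : ℝ) ^ (k - 1) := by
            conv_lhs => rw [hkk, pow_succ]
            ring
        _ ≤ a * (n : ℝ) ^ s := by
            apply mul_le_mul _ hns (by positivity) ha0
            refine le_trans ?_ ha2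
            have : (n : ℝ) ≤ r := by exact_mod_cast hnr.le
            gcongr
    simp only [card_empty, Nat.cast_zero]
    linarith
  · obtain ⟨m, hm0, hmD, hm1, hm2⟩ := exists_coprime_near r D n (by omega) hD hnr
    have hmn : m < n := by nlinarith
    obtain ⟨H', hH', hcard'⟩ := ih m hmn
    obtain ⟨H, hH, hcard⟩ := hbuild n m hm0 hmD hm1 H' hH'
    refine ⟨H, hH, ?_⟩
    rw [hcard]
    push_cast
    have hm1' : (r : ℝ) * m ≤ n := by exact_mod_cast hm1
    have hm2' : (n : ℝ) ≤ r * m + K := by rw [hK]; exact_mod_cast hm2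
    have hP := pow_sub_le n (r * m) K (k - 1) (by positivity) (by linarith) hm2' hK0
    rw [← hkk] at hP
    have hcast : ((k - 1 : ℕ) : ℝ) + 1 = k := by
      rw [Nat.cast_sub (by omega)]; push_cast; ring
    rw [hcast] at hP
    have hM : (r : ℝ) * (m : ℝ) ^ s ≤ ρ * (n : ℝ) ^ s := by
      have h1 : ((r : ℝ) * m) ^ s ≤ (n : ℝ) ^ s :=
        Real.rpow_le_rpow (by positivity) hm1' (by linarith)
      rw [Real.mul_rpow (by positivity) (by positivity)] at h1
      have h2 : (r : ℝ) = ρ * (r : ℝ) ^ s := by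
        rw [hρ, ← Real.rpow_add hr0]; simp
      calc (r : ℝ) * (m : ℝ) ^ s = ρ * ((r : ℝ) ^ s * (m : ℝ) ^ s) := by
            rw [← mul_assoc, ← h2]
        _ ≤ _ := mul_le_mul_of_nonneg_left h1 hρ0.le
    have hid : (m : ℝ) ^ k + r * ((m : ℝ) ^ k / c) = (r * m : ℝ) ^ k / c := by
      rw [mul_pow]
      field_simp
      rw [hc]; ring
    have hP' : (n : ℝ) ^ k / c - k * K / c * (n : ℝ) ^ (k - 1) ≤ (r * m : ℝ) ^ k / c := by
      have := div_le_div_of_nonneg_right hP hcpos.le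
      rw [sub_div] at this
      calc _ = (n : ℝ) ^ k / c - k * K * (n : ℝ) ^ (k - 1) / c := by ring
        _ ≤ _ := this
    have hE : k * K / c * (n : ℝ) ^ (k - 1) ≤ a * (1 - ρ) * (n : ℝ) ^ s :=
      mul_le_mul ha1 hns (by positivity) (mul_nonneg ha0 (by linarith))
    have hR : (r : ℝ) * ((m : ℝ) ^ k / c - a * (m : ℝ) ^ s) ≤ r * H'.card :=
      mul_le_mul_of_nonneg_left hcard' hr0.le
    have hM' := mul_le_mul_of_nonneg_left hM ha0
    nlinarith

theorem card_upper {n r k : ℕ} (hk : 2 ≤ k) (hrk : k < r) (H : Finset (Finset (Fin n)))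
    (h1 : ∀ A ∈ H, A.card = r)
    (h2 : ∀ S ⊆ H, S.card = 3 → 3 * r - 2 * k + 1 ≤ (S.sup id).card) :
    H.card ≤ 2 * n ^ k := by
  classical
  have hex : ∀ A : Finset (Fin n), ∃ B : Finset (Fin n), A ∈ H → B ⊆ A ∧ B.card = k := by
    intro A
    by_cases hA : A ∈ H
    · obtain ⟨B, hB⟩ := Finset.exists_subset_card_eq (show k ≤ A.card by rw [h1 A hA]; omega)
      exact ⟨B, fun _ => hB⟩
    · exact ⟨∅, fun h => absurd h hA⟩
  choose f hf using hex
  have himg : H.image f ⊆ powersetCard k univ := by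
    intro B hB
    obtain ⟨A, hA, rfl⟩ := Finset.mem_image.1 hB
    exact mem_powersetCard.2 ⟨subset_univ _, (hf A hA).2⟩
  have hfib : ∀ B ∈ H.image f, (H.filter (fun A => f A = B)).card ≤ 2 := by
    intro B _
    by_contra hcon
    obtain ⟨S, hS, hS3⟩ := Finset.exists_subset_card_eq
      (show 3 ≤ (H.filter (fun A => f A = B)).card by omega)
    have h := h2 S (hS.trans (filter_subset _ _)) hS3
    obtain ⟨X, Y, W, -, -, -, rfl⟩ := Finset.card_eq_three.1 hS3
    have hX := mem_filter.1 (hS (show X ∈ ({X, Y, W} : Finset _) by simp))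
    have hY := mem_filter.1 (hS (show Y ∈ ({X, Y, W} : Finset _) by simp))
    have hW := mem_filter.1 (hS (show W ∈ ({X, Y, W} : Finset _) by simp))
    have bX := hf X hX.1
    have bY := hf Y hY.1
    have bW := hf W hW.1
    rw [hX.2] at bX
    rw [hY.2] at bY
    rw [hW.2] at bW
    have hsup : ({X, Y, W} : Finset (Finset (Fin n))).sup id ⊆ X ∪ (Y \ B ∪ W \ B) := by
      intro x hx
      simp only [Finset.sup_insert, Finset.sup_singleton, id, Finset.sup_eq_union,
        Finset.mem_union] at hx
      simp only [Finset.mem_union, Finset.mem_sdiff]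
      by_cases hb : x ∈ B
      · exact Or.inl (bX.1 hb)
      · tauto
    have l1 := card_le_card hsup
    have l2 := card_union_le X (Y \ B ∪ W \ B)
    have l3 := card_union_le (Y \ B) (W \ B)
    have l4 := card_sdiff_add_card_eq_card bY.1
    have l5 := card_sdiff_add_card_eq_card bW.1
    have := h1 X hX.1
    have := h1 Y hY.1
    have := h1 W hW.1
    omega
  calc H.card ≤ 2 * (H.image f).card := Finset.card_le_mul_card_image _ _ hfib
    _ ≤ 2 * (powersetCard k (univ : Finset (Fin n))).card :=
      Nat.mul_le_mul_left _ (card_le_card himg)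
    _ ≤ 2 * n ^ k := by
      rw [card_powersetCard, card_univ, Fintype.card_fin]
      exact Nat.mul_le_mul_left _ (Nat.choose_le_pow _ _)

/-- For fixed r > k ≥ 2, liminf f_r(n,3r-2k,3)/n^k ≥ 1/(r^k - r); more precisely,
there are constants a and δ ≤ 0.525 such that for every n ≥ 1 there is a
G_r(3r-2k,3)-free r-graph on n vertices, with pairwise edge intersections of size
at most k-1, having at least n^k/(r^k-r) - a·n^{k-1+δ} edges. -/
theorem liminf_lower_bound (r k : ℕ) (hk : 2 ≤ k) (hrk : k < r) :
    (1 / ((r : ℝ) ^ k - r) ≤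
      liminf (fun n : ℕ =>
        (sparseTuranNumber n r (3 * r - 2 * k) 3 : ℝ) / n ^ k) atTop) ∧
    ∃ a : ℝ, ∃ δ : ℝ, 0 < δ ∧ δ ≤ 0.525 ∧
      ∀ n : ℕ, 1 ≤ n → ∃ H : Finset (Finset (Fin n)),
        (∀ A ∈ H, A.card = r) ∧
        (∀ A ∈ H, ∀ B ∈ H, ∀ C ∈ H, A ≠ B → A ≠ C → B ≠ C →
          3 * r - 2 * k + 1 ≤ (A ∪ B ∪ C).card) ∧
        (∀ A ∈ H, ∀ B ∈ H, A ≠ B → (A ∩ B).card ≤ k - 1) ∧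
        (n : ℝ) ^ k / ((r : ℝ) ^ k - r) - a * (n : ℝ) ^ ((k : ℝ) - 1 + δ) ≤
          H.card := by
  obtain ⟨a, ha0, ha⟩ := quantitative hk hrk
  refine ⟨?_, a, 1 / 2, by norm_num, by norm_num, ?_⟩
  · have hr0 : ∀ n : ℕ, ∀ H : Finset (Finset (Fin n)), GoodH r k H →
        H.card ≤ sparseTuranNumber n r (3 * r - 2 * k) 3 := by
      intro n H hH
      apply le_csSup
      · refine ⟨2 * n ^ k, ?_⟩
        rintro m ⟨H, h1, h2, rfl⟩
        exact card_upper hk hrk H h1 h2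
      · refine ⟨H, hH.1, ?_, rfl⟩
        intro S hS hS3
        obtain ⟨X, Y, W, n1, n2, n3, rfl⟩ := Finset.card_eq_three.1 hS3
        have := hH.2.1 X (hS (by simp)) Y (hS (by simp)) W (hS (by simp)) n1 n2 n3
        simpa [Finset.sup_insert, Finset.union_assoc] using this
    have hup : ∀ n : ℕ, sparseTuranNumber n r (3 * r - 2 * k) 3 ≤ 2 * n ^ k := by
      intro n
      apply csSup_le
      · refine ⟨0, ∅, by simp, ?_, by simp⟩
        intro S hS hS3
        rw [Finset.subset_empty.1 hS] at hS3
        simp at hS3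
      · rintro m ⟨H, h1, h2, rfl⟩
        exact card_upper hk hrk H h1 h2
    have hlim : Tendsto (fun n : ℕ => 1 / ((r : ℝ) ^ k - r) - a * (n : ℝ) ^ (-(1 / 2 : ℝ)))
        atTop (nhds (1 / ((r : ℝ) ^ k - r))) := by
      have h1 : Tendsto (fun n : ℕ => (n : ℝ) ^ (-(1 / 2 : ℝ))) atTop (nhds 0) :=
        (tendsto_rpow_neg_atTop (by norm_num)).comp tendsto_natCast_atTop_atTop
      simpa using (h1.const_mul a).const_sub (1 / ((r : ℝ) ^ k - r))
    rw [← hlim.liminf_eq]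
    apply liminf_le_liminf
    · filter_upwards [eventually_ge_atTop 1] with n hn
      have hn0 : (0 : ℝ) < n := by exact_mod_cast hn
      obtain ⟨H, hH, hc⟩ := ha n
      have h1 : (H.card : ℝ) ≤ sparseTuranNumber n r (3 * r - 2 * k) 3 := by
        exact_mod_cast hr0 n H hH
      rw [le_div_iff₀ (by positivity)]
      refine le_trans (le_of_eq ?_) (hc.trans h1)
      have h2 : (n : ℝ) ^ ((k : ℝ) - 1 + 1 / 2) = (n : ℝ) ^ (-(1 / 2 : ℝ)) * (n : ℝ) ^ k := by
        rw [← Real.rpow_natCast, ← Real.rpow_add hn0]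
        congr 1
        ring
      rw [h2]
      ring
    · exact hlim.isBoundedUnder_ge
    · apply IsBoundedUnder.isCoboundedUnder_ge
      refine ⟨2, ?_⟩
      rw [eventually_map]
      filter_upwards [eventually_ge_atTop 1] with n hn
      have hn0 : (0 : ℝ) < n := by exact_mod_cast hn
      rw [div_le_iff₀ (by positivity)]
      exact_mod_cast hup n
  · intro n _
    obtain ⟨H, hH, hc⟩ := ha n
    exact ⟨H, hH.1, hH.2.1, hH.2.2, hc⟩
end

section
/- For every fixed r ≥ 3, lim_{n→∞} f_r(n, 3r-4, 3)/n^2 = 1/(r^2 - r - 1). -/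
open Finset Filter

namespace DTD

/-- strong sparseness -/
def Good {V : Type*} [DecidableEq V] (r : ℕ) (H : Finset (Finset V)) : Prop :=
  (∀ A ∈ H, A.card = r) ∧
  (∀ A ∈ H, ∀ B ∈ H, A ≠ B → (A ∩ B).card ≤ 2) ∧
  (∀ A ∈ H, ∀ B ∈ H, ∀ C ∈ H, A ≠ B → A ≠ C → B ≠ C → 2 ≤ (A ∩ B).card →
    (C ∩ (A ∪ B)).card ≤ 1)

theorem glue {V W Ω : Type*} [DecidableEq V] [DecidableEq W] [DecidableEq Ω] {r : ℕ} (hr : 2 ≤ r)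
    (H : Finset (Finset V)) (hH : Good r H) (φ : Ω → V → W)
    (Os : Finset Ω) (hinj : ∀ ω ∈ Os, Function.Injective (φ ω))
    (hstar : ∀ ω ∈ Os, ∀ ω' ∈ Os, ∀ A ∈ H, ∀ i j : V, ∀ i' ∈ A, ∀ j' ∈ A, i ≠ j →
      φ ω i = φ ω' i' → φ ω j = φ ω' j' → ω = ω') :
    ∃ H' : Finset (Finset W), Good r H' ∧ H'.card = Os.card * H.card := by
  obtain ⟨h1, h2, h3⟩ := hH
  -- two common points force the same index
  have key : ∀ ω ∈ Os, ∀ ω' ∈ Os, ∀ S : Finset V, ∀ A ∈ H,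
      2 ≤ (A.image (φ ω') ∩ S.image (φ ω)).card → ω = ω' := by
    intro ω hω ω' hω' S A hA hc
    obtain ⟨x, hx, y, hy, hxy⟩ := Finset.one_lt_card.mp hc
    simp only [Finset.mem_inter, Finset.mem_image] at hx hy
    obtain ⟨⟨i', hi', hxi'⟩, ⟨i, hi, hxi⟩⟩ := hx
    obtain ⟨⟨j', hj', hyj'⟩, ⟨j, hj, hyj⟩⟩ := hy
    refine hstar ω hω ω' hω' A hA i j i' hi' j' hj' ?_ (hxi.trans hxi'.symm) (hyj.trans hyj'.symm)
    rintro rfl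
    exact hxy (hxi.symm.trans hyj)
  refine ⟨(Os ×ˢ H).image (fun p => p.2.image (φ p.1)), ⟨?_, ?_, ?_⟩, ?_⟩
  · intro A hA
    obtain ⟨⟨ω, A⟩, hp, rfl⟩ := Finset.mem_image.mp hA
    rw [Finset.mem_product] at hp
    simp only
    rw [Finset.card_image_of_injective _ (hinj ω hp.1), h1 A hp.2]
  · intro A hA B hB hAB
    obtain ⟨⟨ω, A⟩, hp, rfl⟩ := Finset.mem_image.mp hA
    obtain ⟨⟨ω', B⟩, hp', rfl⟩ := Finset.mem_image.mp hB
    rw [Finset.mem_product] at hp hp'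
    simp only at *
    by_contra hcon
    obtain rfl := key ω' hp'.1 ω hp.1 B A hp.2 (by omega)
    rw [← Finset.image_inter _ _ (hinj _ hp.1), Finset.card_image_of_injective _ (hinj _ hp.1)] at hcon
    exact hcon (h2 A hp.2 B hp'.2 (fun h => hAB (by rw [h])))
  · intro A hA B hB C hC hAB hAC hBC hc
    obtain ⟨⟨ω, A⟩, hp, rfl⟩ := Finset.mem_image.mp hA
    obtain ⟨⟨ω', B⟩, hp', rfl⟩ := Finset.mem_image.mp hB
    obtain ⟨⟨ω'', C⟩, hp'', rfl⟩ := Finset.mem_image.mp hC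
    rw [Finset.mem_product] at hp hp' hp''
    simp only at *
    obtain rfl := key ω' hp'.1 ω hp.1 B A hp.2 (by omega)
    rw [← Finset.image_inter _ _ (hinj _ hp.1), Finset.card_image_of_injective _ (hinj _ hp.1)] at hc
    by_contra hcon
    rw [← Finset.image_union] at hcon
    obtain rfl := key ω' hp'.1 ω'' hp''.1 (A ∪ B) C hp''.2 (by omega)
    rw [← Finset.image_inter _ _ (hinj _ hp.1), Finset.card_image_of_injective _ (hinj _ hp.1)] at hcon
    exact hcon (h3 A hp.2 B hp'.2 C hp''.2 (fun h => hAB (by rw [h])) (fun h => hAC (by rw [h]))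
      (fun h => hBC (by rw [h])) hc)
  · rw [Finset.card_image_of_injOn, Finset.card_product]
    rintro ⟨ω, A⟩ hp ⟨ω', B⟩ hp' heq
    rw [Finset.mem_coe, Finset.mem_product] at hp hp'
    simp only at *
    have hcard : (B.image (φ ω')).card = r := by
      rw [Finset.card_image_of_injective _ (hinj ω' hp'.1), h1 B hp'.2]
    obtain rfl := key ω hp.1 ω' hp'.1 A B hp'.2 (by rw [heq, Finset.inter_self]; omega)
    rw [Finset.image_injective (hinj _ hp.1) heq]

theorem Good.sparse {V : Type*} [DecidableEq V] {r : ℕ} (hr : 3 ≤ r) {H : Finset (Finset V)}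
    (hH : Good r H) (S : Finset (Finset V)) (hS : S ⊆ H) (hc : S.card = 3) :
    3 * r - 4 + 1 ≤ (S.sup id).card := by
  obtain ⟨h1, h2, h3⟩ := hH
  obtain ⟨A, B, C, hAB, hAC, hBC, rfl⟩ := Finset.card_eq_three.mp hc
  have hA : A ∈ H := hS (by simp)
  have hB : B ∈ H := hS (by simp)
  have hC : C ∈ H := hS (by simp)
  have main : ∀ A ∈ H, ∀ B ∈ H, ∀ C ∈ H, A ≠ B → A ≠ C → B ≠ C → 2 ≤ (A ∩ B).card →
    3 * r - 4 + 1 ≤ (C ∪ (A ∪ B)).card := by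
    intro A hA B hB C hC hAB hAC hBC h
    have e1 := Finset.card_union_add_card_inter A B
    have e2 := Finset.card_union_add_card_inter C (A ∪ B)
    have := h1 A hA; have := h1 B hB; have := h1 C hC
    have := h2 A hA B hB hAB
    have := h3 A hA B hB C hC hAB hAC hBC h
    omega
  have hsup : ({A, B, C} : Finset (Finset V)).sup id = A ∪ B ∪ C := by
    simp [Finset.sup_insert, Finset.union_assoc]
  rw [hsup]
  by_cases hab : 2 ≤ (A ∩ B).card
  · have := main A hA B hB C hC hAB hAC hBC hab
    rwa [Finset.union_comm]
  by_cases hac : 2 ≤ (A ∩ C).card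
  · have := main A hA C hC B hB hAC hAB hBC.symm hac
    rwa [show A ∪ B ∪ C = B ∪ (A ∪ C) by ext x; simp; tauto]
  by_cases hbc : 2 ≤ (B ∩ C).card
  · have := main B hB C hC A hA hBC hAB.symm hAC.symm hbc
    rwa [show A ∪ B ∪ C = A ∪ (B ∪ C) by ext x; simp]
  have e1 := Finset.card_union_add_card_inter A B
  have e2 := Finset.card_union_add_card_inter (A ∪ B) C
  have e3 : ((A ∪ B) ∩ C).card ≤ (A ∩ C).card + (B ∩ C).card := by
    rw [Finset.union_inter_distrib_right]; exact Finset.card_union_le _ _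
  have := h1 A hA; have := h1 B hB; have := h1 C hC
  omega

end DTD

namespace DTD

section field
variable {F : Type*} [Field F] [Fintype F] [DecidableEq F]

theorem card_nonsq (hF : ringChar F ≠ 2) :
    2 * (univ.filter (fun a : F => quadraticChar F a = -1)).card + 1 = Fintype.card F := by
  have h := quadraticChar_sum_zero hF
  have h2 : ∀ a : F, quadraticChar F a = 1 - 2 * (if quadraticChar F a = -1 then 1 else 0)
      - (if a = 0 then 1 else 0) := by
    intro a
    by_cases ha : a = 0
    · subst ha; simp
    · rcases quadraticChar_dichotomy ha with h | h <;> simp [h, ha]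
  rw [Finset.sum_congr rfl (fun a _ => h2 a), Finset.sum_sub_distrib, Finset.sum_sub_distrib,
    ← Finset.mul_sum, Finset.sum_boole] at h
  simp only [sum_const, card_univ, sum_ite_eq', mem_univ, if_true, nsmul_eq_mul, mul_one] at h
  zify
  linarith

theorem exists_flip_point (hF : ringChar F ≠ 2) (T : Finset F) (hT : 2 * T.card + 1 < Fintype.card F)
    {x x' : F} (hx : x ≠ x') : ∃ y, y ∉ T ∧ y ≠ x ∧ y ≠ x' ∧
      quadraticChar F (x - y) = - quadraticChar F (x' - y) := by
  have hN := card_nonsq hF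
  set N := univ.filter (fun a : F => quadraticChar F a = -1) with hNdef
  have hlt : T.card < N.card := by omega
  have hne : ∀ ν ∈ N, ν ≠ 0 ∧ 1 - ν ≠ 0 := by
    intro ν hν
    have h : quadraticChar F ν = -1 := (Finset.mem_filter.mp hν).2
    constructor
    · rintro rfl; simp at h
    · intro h1
      have : ν = 1 := (sub_eq_zero.mp h1).symm
      subst this
      simp at h
  have hinj : Set.InjOn (fun ν : F => (x - ν * x') / (1 - ν)) N := by
    intro ν hν μ hμ h
    have h1 := (hne ν hν).2
    have h2 := (hne μ hμ).2
    simp only at h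
    rw [div_eq_div_iff h1 h2] at h
    have : (x - x') * (ν - μ) = 0 := by linear_combination h
    rcases mul_eq_zero.mp this with h | h
    · exact absurd (sub_eq_zero.mp h) hx
    · exact sub_eq_zero.mp h
  have : ∃ ν ∈ N, (x - ν * x') / (1 - ν) ∉ T := by
    by_contra hcon
    push Not at hcon
    have := Finset.card_le_card_of_injOn (fun ν : F => (x - ν * x') / (1 - ν)) hcon hinj
    omega
  obtain ⟨ν, hν, hy⟩ := this
  obtain ⟨h0, h1⟩ := hne ν hν
  have hχ : quadraticChar F ν = -1 := (Finset.mem_filter.mp hν).2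
  have e1 : x' - (x - ν * x') / (1 - ν) = (x' - x) / (1 - ν) := by field_simp; ring
  have e2 : x - (x - ν * x') / (1 - ν) = ν * (x' - (x - ν * x') / (1 - ν)) := by
    rw [e1]; field_simp; ring
  have e3 : x' - (x - ν * x') / (1 - ν) ≠ 0 := by
    rw [e1]; exact div_ne_zero (sub_ne_zero.mpr hx.symm) h1
  refine ⟨_, hy, ?_, ?_, ?_⟩
  · intro h
    rw [← sub_eq_zero, ← neg_eq_zero, neg_sub, e2] at h
    exact mul_ne_zero h0 e3 h
  · intro h
    rw [← sub_eq_zero, ← neg_eq_zero, neg_sub] at h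
    exact e3 h
  · rw [e2, map_mul, hχ]; ring

theorem exists_flip (hF : ringChar F ≠ 2) (hneg : quadraticChar F (-1) = 1) {l : ℕ}
    (hl : 2 ^ l + 2 * l + 1 < Fintype.card F) (e : Sym2 (Fin l)) :
    ∃ t t' : Fin l → F, Function.Injective t ∧ Function.Injective t' ∧
      ∀ i j, i ≠ j → quadraticChar F (t' i - t' j) =
        (if e = s(i, j) then -1 else 1) * quadraticChar F (t i - t j) := by
  have hsymm : ∀ a b : F, quadraticChar F (a - b) = quadraticChar F (b - a) := by
    intro a b
    rw [← neg_sub b a, ← neg_one_mul, map_mul, hneg, one_mul]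
  have hpow : 0 < 2 ^ l := by positivity
  obtain ⟨u⟩ : Nonempty (Fin l ↪ F) :=
    Function.Embedding.nonempty_of_card_le (by rw [Fintype.card_fin]; omega)
  induction e with | _ i0 j0
  by_cases hij : i0 = j0
  · subst hij
    refine ⟨u, u, u.injective, u.injective, fun i j h => ?_⟩
    rw [if_neg, one_mul]
    intro h'
    rw [Sym2.eq_iff] at h'
    rcases h' with h' | h' <;> exact h (by rw [← h'.1, ← h'.2])
  set T : Finset F := univ.image u with hTdef
  have hTc : T.card = l := by
    rw [hTdef, Finset.card_image_of_injective _ u.injective, Finset.card_univ, Fintype.card_fin]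
  have huT : ∀ i, u i ∈ T := fun i => Finset.mem_image_of_mem _ (mem_univ i)
  obtain ⟨x, hx, x', hx', hxx, hxeq⟩ := Finset.exists_ne_map_eq_of_card_lt_of_maps_to
    (s := Tᶜ) (t := (univ : Finset (Fin l → Bool)))
    (f := fun x j => decide (quadraticChar F (x - u j) = 1))
    (by rw [Finset.card_compl, hTc, Finset.card_univ]; simp; omega) (fun _ _ => mem_univ _)
  rw [Finset.mem_compl] at hx hx'
  have hsame : ∀ j, quadraticChar F (x - u j) = quadraticChar F (x' - u j) := by
    intro j
    have h := congrFun hxeq j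
    simp only [decide_eq_decide] at h
    have h1 : x - u j ≠ 0 := fun h => hx (by rw [sub_eq_zero.mp h]; exact huT j)
    have h2 : x' - u j ≠ 0 := fun h => hx' (by rw [sub_eq_zero.mp h]; exact huT j)
    rcases quadraticChar_dichotomy h1 with a | a <;> rcases quadraticChar_dichotomy h2 with b | b <;>
      simp [a, b] at h ⊢
  obtain ⟨y, hyT, hyx, hyx', hχ⟩ := exists_flip_point hF T (by rw [hTc]; omega) hxx
  let g : F → Fin l → F := fun x i => if i = i0 then x else if i = j0 then y else u i
  have hg : ∀ x, x ∉ T → y ≠ x → Function.Injective (g x) := by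
    intro x hx hyx i j h
    have hu : ∀ i j, u i = u j → i = j := fun i j h => u.injective h
    have h1 : ∀ i, u i ≠ x := fun i h => hx (h ▸ huT i)
    have h2 : ∀ i, u i ≠ y := fun i h => hyT (h ▸ huT i)
    simp only [g] at h
    split_ifs at h <;> grind
  refine ⟨g x, g x', hg x hx hyx, hg x' hx' hyx', fun i j h => ?_⟩
  have hχ' : quadraticChar F (x' - y) = - quadraticChar F (x - y) := by rw [hχ]; ring
  have hij' : ¬ j0 = i0 := fun h => hij h.symm
  simp only [Sym2.eq_iff, g]
  by_cases hi : i = i0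
  · subst hi
    by_cases hj : j = j0
    · subst hj
      simp [hij', hχ']
    · have : ¬ j = i := fun h' => h h'.symm
      have : ¬ j0 = j := fun h' => hj h'.symm
      simp [*]
  · by_cases hj : j = i0
    · subst hj
      by_cases hi2 : i = j0
      · subst hi2
        simp [hi, hsymm y, hχ']
      · have : ¬ j0 = i := fun h' => hi2 h'.symm
        simp [*, hsymm (u i)]
    · have h1 : ¬ i0 = i := fun h' => hi h'.symm
      have h2 : ¬ i0 = j := fun h' => hj h'.symm
      simp [hi, hj, h1, h2]

/-- every sign pattern is realised in a power of `F` -/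
theorem exists_pattern (hF : ringChar F ≠ 2) (hneg : quadraticChar F (-1) = 1) {l : ℕ}
    (hl : 2 ^ l + 2 * l + 1 < Fintype.card F) (c : Sym2 (Fin l) → ℤˣ) :
    ∃ p : Fin l → Sym2 (Fin l) → F, ∀ i j, i ≠ j → (∀ e, p i e - p j e ≠ 0) ∧
      ∏ e, quadraticChar F (p i e - p j e) = (c s(i, j) : ℤ) := by
  choose t t' ht ht' hf using exists_flip hF hneg hl
  -- base pattern
  let b : Fin l → Fin l → ℤ := fun i j => ∏ e, quadraticChar F (t e i - t e j)
  have hb : ∀ i j, i ≠ j → b i j = 1 ∨ b i j = -1 := by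
    intro i j hij
    apply Int.isUnit_iff.mp
    rw [IsUnit.prod_univ_iff]
    intro e
    rw [Int.isUnit_iff]
    exact quadraticChar_dichotomy (sub_ne_zero.mpr fun h => hij (ht e h))
  have hsymm : ∀ a b : F, quadraticChar F (a - b) = quadraticChar F (b - a) := by
    intro a b
    rw [← neg_sub b a, ← neg_one_mul, map_mul, hneg, one_mul]
  let bs : Sym2 (Fin l) → ℤ := Sym2.lift ⟨b, fun i j => Finset.prod_congr rfl fun e _ => hsymm _ _⟩
  have hbs : ∀ i j, bs s(i, j) = b i j := fun i j => rfl
  let p : Fin l → Sym2 (Fin l) → F := fun i e => if bs e = (c e : ℤ) then t e i else t' e i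
  refine ⟨p, fun i j hij => ⟨fun e => ?_, ?_⟩⟩
  · simp only [p]
    split_ifs
    · exact sub_ne_zero.mpr fun h => hij (ht e h)
    · exact sub_ne_zero.mpr fun h => hij (ht' e h)
  · have h1 : ∀ e, quadraticChar F (p i e - p j e) =
        (if e = s(i, j) then (if bs s(i, j) = (c s(i, j) : ℤ) then 1 else -1) else 1)
          * quadraticChar F (t e i - t e j) := by
      intro e
      simp only [p]
      by_cases he : e = s(i, j)
      · subst he
        rw [if_pos rfl]
        by_cases h : bs s(i, j) = (c s(i, j) : ℤ)
        · simp only [if_pos h, one_mul]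
        · simp only [if_neg h]; rw [hf _ i j hij, if_pos rfl]
      · rw [if_neg he, one_mul]
        split_ifs with h
        · rfl
        · rw [hf _ i j hij, if_neg he, one_mul]
    rw [Finset.prod_congr rfl fun e _ => h1 e, Finset.prod_mul_distrib, Finset.prod_ite_eq']
    simp only [mem_univ, if_true]
    change _ * b i j = _
    rw [hbs]
    have hc := Int.isUnit_iff.mp (c s(i, j)).isUnit
    rcases hb i j hij with h | h <;> rcases hc with h' | h' <;> simp [h, h']

end field
end DTD

namespace DTD

theorem units_half {q : ℕ} [Fact q.Prime] (hq : q ≠ 2) {J : Type*} [Fintype J] [DecidableEq J] (j0 : J) :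
    ∃ A : Finset (J → ZMod q), (∀ a ∈ A, ∀ j, a j ≠ 0) ∧ (∀ a ∈ A, -a ∉ A) ∧
      (q - 1) ^ Fintype.card J ≤ 2 * A.card := by
  classical
  have : Fact (2 < q) := ⟨lt_of_le_of_ne (Fact.out : q.Prime).two_le hq.symm⟩
  let U : Finset (J → ZMod q) := Fintype.piFinset (fun _ => univ.erase 0)
  have hU : ∀ a, a ∈ U ↔ ∀ j, a j ≠ 0 := by intro a; simp [U]
  have hUc : U.card = (q - 1) ^ Fintype.card J := by
    simp [U, Fintype.card_piFinset, ZMod.card]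
  let A := U.filter (fun a => (a j0).val < (-(a j0)).val)
  refine ⟨A, fun a ha => (hU a).mp (Finset.mem_filter.mp ha).1, ?_, ?_⟩
  · intro a ha ha'
    have h1 := (Finset.mem_filter.mp ha).2
    have h2 := (Finset.mem_filter.mp ha').2
    simp only [Pi.neg_apply, neg_neg] at h2
    omega
  · rw [← hUc]
    have hsub : U ⊆ A ∪ A.image (fun a => -a) := by
      intro a ha
      have ha' := (hU a).mp ha
      rcases lt_trichotomy (a j0).val (-(a j0)).val with h | h | h
      · exact Finset.mem_union_left _ (Finset.mem_filter.mpr ⟨ha, h⟩)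
      · have h' := (ZMod.neg_eq_self_iff (a j0)).mp (ZMod.val_injective q h).symm
        rcases h' with h' | h'
        · exact absurd h' (ha' j0)
        · have := (Fact.out : q.Prime).eq_two_or_odd
          omega
      · refine Finset.mem_union_right _ (Finset.mem_image.mpr ⟨-a, ?_, neg_neg a⟩)
        refine Finset.mem_filter.mpr ⟨(hU _).mpr fun j => ?_, ?_⟩
        · simpa using ha' j
        · simpa using h
    calc U.card ≤ _ := Finset.card_le_card hsub
      _ ≤ _ := Finset.card_union_le _ _
      _ ≤ A.card + A.card := Nat.add_le_add_left Finset.card_image_le _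
      _ = _ := by ring

theorem base_pairs (r : ℕ) (hr : 3 ≤ r) : ∃ A B : Finset (Fin (2 * r - 2)), ∃ P : Finset (Sym2 (Fin (2 * r - 2))),
    A ≠ B ∧ A.card = r ∧ B.card = r ∧ (A ∩ B).card = 2 ∧ P.card ≤ r ^ 2 - r - 1 ∧
    (∀ i ∈ A, ∀ j ∈ A, i ≠ j → s(i, j) ∈ P) ∧ (∀ i ∈ B, ∀ j ∈ B, i ≠ j → s(i, j) ∈ P) := by
  classical
  obtain ⟨k, rfl⟩ : ∃ k, r = k + 3 := ⟨r - 3, by omega⟩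
  let A : Finset (Fin (2 * (k + 3) - 2)) := Finset.Iic ⟨k + 2, by omega⟩
  let B : Finset (Fin (2 * (k + 3) - 2)) := Finset.Ici ⟨k + 1, by omega⟩
  have hA : A.card = k + 3 := by simp [A]
  have hB : B.card = k + 3 := by simp [B]; omega
  have hAB : A ∩ B = Finset.Icc ⟨k + 1, by omega⟩ ⟨k + 2, by omega⟩ := by
    ext x; simp only [A, B, Finset.mem_inter, Finset.mem_Iic, Finset.mem_Ici, Finset.mem_Icc]; exact and_comm
  have hABc : (A ∩ B).card = 2 := by
    rw [hAB, Fin.card_Icc]; simp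
  have c1 := Sym2.card_image_offDiag A
  have c2 := Sym2.card_image_offDiag B
  have mem : ∀ S : Finset (Fin (2 * (k + 3) - 2)), ∀ i ∈ S, ∀ j ∈ S, i ≠ j →
      s(i, j) ∈ S.offDiag.image (Function.uncurry Sym2.mk) := by
    intro S i hi j hj hij
    exact Finset.mem_image.mpr ⟨(i, j), Finset.mem_offDiag.mpr ⟨hi, hj, hij⟩, rfl⟩
  refine ⟨A, B, A.offDiag.image (Function.uncurry Sym2.mk) ∪ B.offDiag.image (Function.uncurry Sym2.mk), ?_, hA, hB, hABc, ?_, ?_, ?_⟩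
  · intro h
    rw [h, Finset.inter_self] at hABc
    omega
  · have e := Finset.card_union_add_card_inter (A.offDiag.image (Function.uncurry Sym2.mk)) (B.offDiag.image (Function.uncurry Sym2.mk))
    have hpos : 0 < (A.offDiag.image (Function.uncurry Sym2.mk) ∩ B.offDiag.image (Function.uncurry Sym2.mk)).card := by
      obtain ⟨x, hx, y, hy, hxy⟩ := Finset.one_lt_card.mp (by rw [hABc]; norm_num : 1 < (A ∩ B).card)
      rw [Finset.mem_inter] at hx hy
      exact Finset.card_pos.mpr ⟨s(x, y), Finset.mem_inter.mpr
        ⟨mem A x hx.1 y hy.1 hxy, mem B x hx.2 y hy.2 hxy⟩⟩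
    rw [c1, c2, hA, hB] at e
    have h2 : (k + 3).choose 2 * 2 = (k + 3) * (k + 2) := by
      rw [Nat.choose_two_right]
      exact Nat.div_mul_cancel (even_iff_two_dvd.mp (by rw [mul_comm]; exact Nat.even_mul_succ_self (k + 2)))
    have h3 : (k + 3) ^ 2 = (k + 3) * (k + 2) + (k + 3) := by ring
    omega
  · exact fun i hi j hj hij => Finset.mem_union_left _ (mem A i hi j hj hij)
  · exact fun i hi j hj hij => Finset.mem_union_right _ (mem B i hi j hj hij)

theorem exists_dense (r : ℕ) (hr : 3 ≤ r) (s M q : ℕ) (hs : 0 < s)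
    (hM : M * (r ^ 2 - r - 1) + 1 ≤ 2 ^ s) [Fact q.Prime] (hq4 : q % 4 = 1)
    (hq : 2 ^ (2 * r - 2) + 2 * (2 * r - 2) + 1 < q) :
    ∃ H : Finset (Finset (Fin s × Sym2 (Fin (2 * r - 2)) → ZMod q)), Good r H ∧
      M * (q - 1) ^ (s * Fintype.card (Sym2 (Fin (2 * r - 2)))) *
        q ^ (s * Fintype.card (Sym2 (Fin (2 * r - 2)))) ≤ H.card * 2 ^ s := by
  classical
  obtain ⟨A0, B0, P, hne, hA0, hB0, hAB0, hP, hPA, hPB⟩ := base_pairs r hr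
  have hl0 : 0 < 2 * r - 2 := by omega
  generalize hl : 2 * r - 2 = l at *
  have hF : ringChar (ZMod q) ≠ 2 := by
    rw [ZMod.ringChar_zmod_n]; rintro rfl; omega
  have hneg : quadraticChar (ZMod q) (-1) = 1 := by
    rw [quadraticChar_one_iff_isSquare (neg_ne_zero.mpr one_ne_zero), ZMod.exists_sq_eq_neg_one_iff]
    omega
  have hcard : 2 ^ l + 2 * l + 1 < Fintype.card (ZMod q) := by rwa [ZMod.card]
  -- colours
  obtain ⟨g⟩ : Nonempty (Option (Fin M × P) ↪ (Fin s → ℤˣ)) := by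
    apply Function.Embedding.nonempty_of_card_le
    simp only [Fintype.card_option, Fintype.card_prod, Fintype.card_fin, Fintype.card_coe,
      Fintype.card_fun, Fintype.card_units_int]
    exact le_trans (Nat.add_le_add_right (Nat.mul_le_mul_left _ hP) _) hM
  let c : Fin M → Sym2 (Fin l) → Fin s → ℤˣ := fun σ e =>
    if h : e ∈ P then g (some (σ, ⟨e, h⟩)) else g none
  have hc : ∀ σ σ' e e', e' ∈ P → c σ e = c σ' e' → σ = σ' ∧ e = e' := by
    intro σ σ' e e' he' h
    simp only [c, dif_pos he'] at h
    by_cases he : e ∈ P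
    · rw [dif_pos he] at h
      have := g.injective h
      simp at this
      exact this
    · rw [dif_neg he] at h
      have := g.injective h
      simp at this
  have hpat := fun (σ : Fin M) (b : Fin s) =>
    exists_pattern (F := ZMod q) hF hneg hcard (fun e => c σ e b)
  choose p hp using hpat
  let J := Fin s × Sym2 (Fin l)
  let pt : Fin M → Fin l → J → ZMod q := fun σ i j => p σ j.1 i j.2
  let κ : (J → ZMod q) → Fin s → ℤ := fun d b => ∏ e, quadraticChar (ZMod q) (d (b, e))
  have hκmul : ∀ d d', κ (d * d') = κ d * κ d' := by
    intro d d'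
    funext b
    simp only [κ, Pi.mul_apply, map_mul, Finset.prod_mul_distrib]
  have hptne : ∀ σ i j, i ≠ j → ∀ x, pt σ i x - pt σ j x ≠ 0 :=
    fun σ i j hij x => (hp σ x.1 i j hij).1 x.2
  have hκpt : ∀ σ i j, i ≠ j → κ (pt σ i - pt σ j) = fun b => (c σ s(i, j) b : ℤ) := by
    intro σ i j hij
    funext b
    exact (hp σ b i j hij).2
  have hκunit : ∀ a : J → ZMod q, (∀ j, a j ≠ 0) → ∀ b, κ a b = 1 ∨ κ a b = -1 := by
    intro a ha b
    apply Int.isUnit_iff.mp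
    rw [IsUnit.prod_univ_iff]
    intro e
    rw [Int.isUnit_iff]
    exact quadraticChar_dichotomy (ha _)
  obtain ⟨A, hAu, hAneg, hAc⟩ := units_half (q := q) (by rintro rfl; omega)
    (J := J) (⟨0, hs⟩, s(⟨0, hl0⟩, ⟨0, hl0⟩))
  -- pigeonhole
  obtain ⟨z, hz⟩ : ∃ z : Fin s → ℤ, A.card ≤ (A.filter (fun a => κ a = z)).card * 2 ^ s := by
    let T : Finset (Fin s → ℤ) := univ.image (fun (c : Fin s → ℤˣ) b => (c b : ℤ))
    have hT : T.card ≤ 2 ^ s := by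
      refine Finset.card_image_le.trans ?_
      simp
    have hm : ∀ a ∈ A, κ a ∈ T := by
      intro a ha
      have h := fun b => Int.isUnit_iff.mpr (hκunit a (hAu a ha) b)
      exact Finset.mem_image.mpr ⟨fun b => (h b).unit, mem_univ _, rfl⟩
    by_contra hcon
    push Not at hcon
    have h1 := Finset.card_eq_sum_card_fiberwise (f := κ) (s := A) (t := T) hm
    have hTne : T.Nonempty := Finset.univ_nonempty.image _
    have h2 : ∑ z ∈ T, (A.filter (fun a => κ a = z)).card * 2 ^ s < ∑ z ∈ T, A.card :=
      Finset.sum_lt_sum_of_nonempty hTne fun z _ => hcon z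
    rw [← Finset.sum_mul, ← h1, Finset.sum_const, smul_eq_mul, mul_comm] at h2
    exact absurd (lt_of_lt_of_le h2 (Nat.mul_le_mul_right _ hT)) (lt_irrefl _)
  set Az := A.filter (fun a => κ a = z) with hAz
  have hH0 : Good r ({A0, B0} : Finset (Finset (Fin l))) := by
    refine ⟨?_, ?_, ?_⟩
    · simp [hA0, hB0]
    · intro X hX Y hY hXY
      simp only [Finset.mem_insert, Finset.mem_singleton] at hX hY
      rcases hX with rfl | rfl <;> rcases hY with rfl | rfl
      · exact absurd rfl hXY
      · exact hAB0.le
      · rw [Finset.inter_comm]; exact hAB0.le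
      · exact absurd rfl hXY
    · intro X hX Y hY Z hZ h1 h2 h3
      simp only [Finset.mem_insert, Finset.mem_singleton] at hX hY hZ
      rcases hX with rfl | rfl <;> rcases hY with rfl | rfl <;> rcases hZ with rfl | rfl <;>
        first | exact absurd rfl h1 | exact absurd rfl h2 | exact absurd rfl h3
  have hPH : ∀ X ∈ ({A0, B0} : Finset (Finset (Fin l))), ∀ i ∈ X, ∀ j ∈ X, i ≠ j → s(i, j) ∈ P := by
    intro X hX
    simp only [Finset.mem_insert, Finset.mem_singleton] at hX
    rcases hX with rfl | rfl
    · exact hPA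
    · exact hPB
  let φ : Fin M × (J → ZMod q) × (J → ZMod q) → Fin l → (J → ZMod q) :=
    fun ω i => ω.2.1 * pt ω.1 i + ω.2.2
  obtain ⟨H, hH, hHc⟩ := glue (by omega : 2 ≤ r) _ hH0 φ (univ ×ˢ (Az ×ˢ univ)) (by
      rintro ⟨σ, a, b⟩ hω i j h
      simp only [Finset.mem_product, mem_univ, true_and, and_true] at hω
      by_contra hij
      have h1 := congrFun h (⟨0, hs⟩, s(⟨0, hl0⟩, ⟨0, hl0⟩))
      simp only [φ, Pi.add_apply, Pi.mul_apply, add_left_inj] at h1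
      have h2 := mul_left_cancel₀ (hAu a (Finset.mem_filter.mp hω).1 _) h1
      exact hptne σ i j hij _ (sub_eq_zero.mpr h2)) (by
      rintro ⟨σ, a, b⟩ hω ⟨σ', a', b'⟩ hω' X hX i j i' hi' j' hj' hij h1 h2
      simp only [Finset.mem_product, mem_univ, true_and, and_true] at hω hω'
      simp only [φ] at h1 h2
      have hu := hAu a (Finset.mem_filter.mp hω).1
      have hu' := hAu a' (Finset.mem_filter.mp hω').1
      have hd : a * (pt σ i - pt σ j) = a' * (pt σ' i' - pt σ' j') := by
        linear_combination h1 - h2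
      have hij' : i' ≠ j' := by
        rintro rfl
        have h3 := congrFun hd (⟨0, hs⟩, s(⟨0, hl0⟩, ⟨0, hl0⟩))
        simp only [sub_self, mul_zero, Pi.mul_apply, Pi.zero_apply, Pi.sub_apply] at h3
        exact mul_ne_zero (hu _) (hptne σ i j hij _) h3
      have hk := congrArg κ hd
      rw [hκmul, hκmul, (Finset.mem_filter.mp hω).2, (Finset.mem_filter.mp hω').2,
        hκpt σ i j hij, hκpt σ' i' j' hij'] at hk
      have hcc : c σ s(i, j) = c σ' s(i', j') := by
        funext t
        have h3 := congrFun hk t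
        simp only [Pi.mul_apply] at h3
        have hz0 : z t ≠ 0 := by
          rw [← (Finset.mem_filter.mp hω).2]
          rcases hκunit a hu t with h | h <;> rw [h] <;> norm_num
        exact Units.ext (mul_left_cancel₀ hz0 h3)
      obtain ⟨rfl, he⟩ := hc _ _ _ _ (hPH X hX i' hi' j' hj' hij') hcc
      rw [Sym2.eq_iff] at he
      rcases he with ⟨rfl, rfl⟩ | ⟨rfl, rfl⟩
      · have ha : a = a' := by
          funext t
          have h3 := congrFun hd t
          exact mul_right_cancel₀ (hptne σ i j hij t) h3
        subst ha
        have hb : b = b' := add_left_cancel h1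
        rw [hb]
      · exfalso
        have ha : a' = -a := by
          funext t
          have h3 := congrFun hd t
          simp only [Pi.mul_apply, Pi.sub_apply] at h3
          refine mul_right_cancel₀ (hptne σ i j hij t) ?_
          simp only [Pi.neg_apply]
          linear_combination h3
        exact hAneg a (Finset.mem_filter.mp hω).1 (ha ▸ (Finset.mem_filter.mp hω').1))
  refine ⟨H, hH, ?_⟩
  rw [hHc, Finset.card_product, Finset.card_product, Finset.card_pair hne, Finset.card_univ,
    Finset.card_univ, Fintype.card_fin, Fintype.card_fun, ZMod.card, Fintype.card_prod, Fintype.card_fin]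
  rw [Fintype.card_prod, Fintype.card_fin] at hAc
  set I := s * Fintype.card (Sym2 (Fin l))
  calc M * (q - 1) ^ I * q ^ I ≤ M * (2 * (Az.card * 2 ^ s)) * q ^ I := by
        gcongr; exact hAc.trans (by gcongr)
    _ = _ := by ring

end DTD

namespace DTD

theorem upper {V : Type*} [Fintype V] [DecidableEq V] {r : ℕ} (hr : 3 ≤ r) (H : Finset (Finset V))
    (hu : ∀ A ∈ H, A.card = r)
    (tri : ∀ A ∈ H, ∀ B ∈ H, ∀ C ∈ H, A ≠ B → A ≠ C → B ≠ C →
      (A ∩ B).card + (C ∩ (A ∪ B)).card ≤ 3) (h3 : 3 ≤ H.card) :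
    (r * (r - 1)) * H.card ≤ Fintype.card V * (Fintype.card V - 1) + H.card + 2 * Fintype.card V := by
  classical
  let deg : Finset V → ℕ := fun T => (H.filter (fun A => T ⊆ A)).card
  let bad : Finset V → Prop := fun A => ∃ B ∈ H, A ≠ B ∧ 3 ≤ (A ∩ B).card
  have third : ∀ A ∈ H, ∀ B ∈ H, ∃ C ∈ H, A ≠ C ∧ B ≠ C := by
    intro A hA B hB
    by_contra hcon
    push Not at hcon
    have : H ⊆ {A, B} := by
      intro C hC
      by_cases h : A = C
      · simp [h]
      · simp [hcon C hC h]
    have := (Finset.card_le_card this).trans Finset.card_le_two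
    omega
  -- pair degrees
  have hdeg : ∀ T : Finset V, T.card = 2 → deg T ≤ 2 := by
    intro T hT
    by_contra hcon
    obtain ⟨A, B, C, hA, hB, hC, hAB, hAC, hBC⟩ := Finset.two_lt_card_iff.mp (not_le.mp hcon)
    rw [Finset.mem_filter] at hA hB hC
    have t := tri A hA.1 B hB.1 C hC.1 hAB hAC hBC
    have t1 : T.card ≤ (A ∩ B).card := Finset.card_le_card (Finset.subset_inter hA.2 hB.2)
    have t2 : T.card ≤ (C ∩ (A ∪ B)).card :=
      Finset.card_le_card (Finset.subset_inter hC.2 (hA.2.trans Finset.subset_union_left))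
    omega
  -- weight of an edge
  have hw : ∀ A ∈ H, ((A.powersetCard 2).filter (fun T => deg T = 2)).card ≤
      1 + 2 * (if bad A then 1 else 0) := by
    intro A hA
    have partner : ∀ T, T ⊆ A → deg T = 2 → ∃ B ∈ H, A ≠ B ∧ T ⊆ B := by
      intro T hTA hT
      have : 1 < (H.filter (fun A => T ⊆ A)).card := by change 1 < deg T; omega
      obtain ⟨B, hB, hBA⟩ := Finset.exists_mem_ne this A
      rw [Finset.mem_filter] at hB
      exact ⟨B, hB.1, hBA.symm, hB.2⟩
    rcases Finset.eq_empty_or_nonempty ((A.powersetCard 2).filter (fun T => deg T = 2)) with h | ⟨T0, hT0⟩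
    · rw [h]; simp
    rw [Finset.mem_filter, Finset.mem_powersetCard] at hT0
    obtain ⟨B, hB, hAB, hTB⟩ := partner T0 hT0.1.1 hT0.2
    have hcAB : 2 ≤ (A ∩ B).card := by
      rw [← hT0.1.2]; exact Finset.card_le_card (Finset.subset_inter hT0.1.1 hTB)
    have hsub : (A.powersetCard 2).filter (fun T => deg T = 2) ⊆ (A ∩ B).powersetCard 2 := by
      intro T hT
      rw [Finset.mem_filter, Finset.mem_powersetCard] at hT
      obtain ⟨C, hC, hAC, hTC⟩ := partner T hT.1.1 hT.2
      rw [Finset.mem_powersetCard]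
      refine ⟨Finset.subset_inter hT.1.1 ?_, hT.1.2⟩
      by_cases hBC : B = C
      · rw [hBC]; exact hTC
      · exfalso
        have t := tri A hA B hB C hC hAB hAC hBC
        have t2 : T.card ≤ (C ∩ (A ∪ B)).card :=
          Finset.card_le_card (Finset.subset_inter hTC (hT.1.1.trans Finset.subset_union_left))
        omega
    have hle := Finset.card_le_card hsub
    rw [Finset.card_powersetCard] at hle
    obtain ⟨C, hC, hAC, hBC⟩ := third A hA B hB
    have t := tri A hA B hB C hC hAB hAC hBC
    have h23 : (A ∩ B).card = 2 ∨ (A ∩ B).card = 3 := by omega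
    rcases h23 with h | h
    · rw [h] at hle
      simp at hle
      omega
    · have hb : bad A := ⟨B, hB, hAB, h.ge⟩
      rw [if_pos hb]
      rw [h] at hle
      simpa [Nat.choose] using hle
  -- number of bad edges
  have hbad : (H.filter bad).card ≤ Fintype.card V := by
    have h1 : ∀ v : V, ((H.filter bad).filter (fun A => v ∈ A)).card ≤ 2 := by
      intro v
      by_contra hcon
      obtain ⟨A, B, C, hA, hB, hC, hAB, hAC, hBC⟩ := Finset.two_lt_card_iff.mp (not_le.mp hcon)
      simp only [Finset.mem_filter] at hA hB hC
      obtain ⟨A', hA', hne, hc⟩ := hA.1.2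
      have go : ∀ D ∈ H, v ∈ D → A ≠ D → A' ≠ D → False := by
        intro D hD hv h1 h2
        have t := tri A hA.1.1 A' hA' D hD hne h1 h2
        have : 0 < (D ∩ (A ∪ A')).card :=
          Finset.card_pos.mpr ⟨v, by simp [hv, hA.2]⟩
        omega
      by_cases h : A' = B
      · exact go C hC.1.1 hC.2 hAC (by rw [h]; exact hBC)
      · exact go B hB.1.1 hB.2 hAB h
    have h2 : ∑ v : V, ((H.filter bad).filter (fun A => v ∈ A)).card = ∑ A ∈ H.filter bad, A.card := by
      simp only [Finset.card_filter _ (H.filter bad)]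
      rw [Finset.sum_comm]
      refine Finset.sum_congr rfl fun A _ => ?_
      simp
    have h4 : ∑ A ∈ H.filter bad, A.card = (H.filter bad).card * r := by
      rw [Finset.sum_congr rfl fun A hA => hu A (Finset.mem_filter.mp hA).1]; simp
    have h5 : ∑ v : V, ((H.filter bad).filter (fun A => v ∈ A)).card ≤ ∑ v : V, 2 :=
      Finset.sum_le_sum fun v _ => h1 v
    rw [h2, h4] at h5
    simp at h5
    nlinarith
  -- double counting
  let P : Finset (Finset V) := (univ : Finset V).powersetCard 2
  have hfil : ∀ A : Finset V, P.filter (fun T => T ⊆ A) = A.powersetCard 2 := by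
    intro A; ext T; simp [P, Finset.mem_powersetCard, and_comm]
  have hsum : ∑ T ∈ P, deg T = H.card * r.choose 2 := by
    have : ∀ T, deg T = ∑ A ∈ H, if T ⊆ A then 1 else 0 := fun T => by
      simp only [deg, Finset.card_filter]
    simp only [this]
    rw [Finset.sum_comm]
    rw [Finset.sum_congr rfl (g := fun _ => r.choose 2)]
    · simp
    · intro A hA
      rw [← Finset.card_filter, hfil, Finset.card_powersetCard, hu A hA]
  have hsum2 : ∑ T ∈ P, (if deg T = 2 then deg T else 0) =
      ∑ A ∈ H, ((A.powersetCard 2).filter (fun T => deg T = 2)).card := by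
    have : ∀ T, (if deg T = 2 then deg T else 0) = ∑ A ∈ H, if (T ⊆ A ∧ deg T = 2) then 1 else 0 := by
      intro T
      by_cases h : deg T = 2
      · simp only [h, if_true, and_true]
        rw [← Finset.card_filter]; exact h.symm
      · simp [h]
    rw [Finset.sum_congr rfl fun T _ => this T, Finset.sum_comm]
    refine Finset.sum_congr rfl fun A hA => ?_
    rw [← Finset.card_filter, ← hfil, Finset.filter_filter]
  have hpt : ∑ T ∈ P, 2 * deg T ≤ ∑ T ∈ P, (2 + if deg T = 2 then deg T else 0) := by
    refine Finset.sum_le_sum fun T hT => ?_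
    have := hdeg T (Finset.mem_powersetCard.mp hT).2
    split_ifs <;> omega
  rw [← Finset.mul_sum, hsum, Finset.sum_add_distrib, hsum2] at hpt
  have hw2 := Finset.sum_le_sum hw
  rw [Finset.sum_add_distrib, ← Finset.mul_sum, ← Finset.card_filter] at hw2
  simp only [Finset.sum_const, smul_eq_mul, mul_one, P, Finset.card_powersetCard, Finset.card_univ] at hpt hw2
  have c2 : ∀ k : ℕ, k.choose 2 * 2 = k * (k - 1) := by
    intro k
    rw [Nat.choose_two_right]
    exact Nat.div_mul_cancel (even_iff_two_dvd.mp (Nat.even_mul_pred_self k))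
  rw [← c2 r, ← c2 (Fintype.card V)]
  nlinarith

theorem blowup {V : Type*} [Fintype V] [DecidableEq V] {r : ℕ} (hr : 2 ≤ r) (H : Finset (Finset V))
    (hH : Good r H) (N : ℕ) [NeZero N] (hN : ∀ d, 0 < d → d < Fintype.card V → Nat.Coprime d N) :
    ∃ H' : Finset (Finset (V × ZMod N)), Good r H' ∧ H'.card = N ^ 2 * H.card := by
  classical
  let ν := Fintype.equivFin V
  have hunit : ∀ i j : V, ν i < ν j → IsUnit (((ν j : ℕ) : ZMod N) - ((ν i : ℕ) : ZMod N)) := by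
    intro i j hij
    rw [← Nat.cast_sub hij.le, ZMod.isUnit_iff_coprime]
    exact hN _ (Nat.sub_pos_of_lt hij) (lt_of_le_of_lt (Nat.sub_le _ _) (ν j).2)
  let φ : ZMod N × ZMod N → V → V × ZMod N := fun ω v => (v, ω.1 + ω.2 * ((ν v : ℕ) : ZMod N))
  obtain ⟨H', h1, h2⟩ := glue hr H hH φ univ (fun ω _ i j h => congrArg Prod.fst h) (by
    rintro ⟨a, b⟩ - ⟨a', b'⟩ - X hX i j i' hi' j' hj' hij h1 h2
    simp only [φ, Prod.mk.injEq] at h1 h2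
    obtain ⟨rfl, h1⟩ := h1
    obtain ⟨rfl, h2⟩ := h2
    have hb : b = b' := by
      rcases lt_or_gt_of_ne (fun h => hij (ν.injective h) : ν i ≠ ν j) with h | h
      · exact (hunit i j h).mul_right_cancel (by linear_combination h2 - h1)
      · exact (hunit j i h).mul_right_cancel (by linear_combination h1 - h2)
    subst hb
    rw [add_right_cancel h1])
  refine ⟨H', h1, ?_⟩
  rw [h2, Finset.card_univ, Fintype.card_prod, ZMod.card, sq]

theorem transfer {V : Type*} [Fintype V] [DecidableEq V] {r : ℕ} (hr : 3 ≤ r) (H : Finset (Finset V))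
    (hH : Good r H) (n : ℕ) (hn : Fintype.card V ≤ n) : H.card ≤ sparseTuranNumber n r (3 * r - 4) 3 := by
  classical
  obtain ⟨f⟩ : Nonempty (V ↪ Fin n) :=
    Function.Embedding.nonempty_of_card_le (by rwa [Fintype.card_fin])
  obtain ⟨H', h1, h2⟩ := glue (by omega) H hH (fun _ : Unit => (f : V → Fin n)) univ
    (fun _ _ => f.injective) (fun _ _ _ _ _ _ _ _ _ _ _ _ _ _ _ => rfl)
  rw [Finset.card_univ, Fintype.card_unit, one_mul] at h2
  unfold sparseTuranNumber
  refine le_csSup ⟨Fintype.card (Finset (Fin n)), ?_⟩ ⟨H', h1.1, fun S hS hc => h1.sparse hr S hS hc, h2⟩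
  rintro m ⟨K, -, -, rfl⟩
  exact Finset.card_le_univ K

theorem upper_sparse (n r : ℕ) (hr : 3 ≤ r) :
    (r ^ 2 - r - 1) * sparseTuranNumber n r (3 * r - 4) 3 ≤ n ^ 2 + 2 * n + 2 * (r ^ 2 - r - 1) := by
  obtain ⟨H, hu, hS, hm⟩ : sparseTuranNumber n r (3 * r - 4) 3 ∈ {m | ∃ H : Finset (Finset (Fin n)),
    (∀ A ∈ H, A.card = r) ∧
    (∀ S ⊆ H, S.card = 3 → 3 * r - 4 + 1 ≤ (S.sup id).card) ∧
    H.card = m} := by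
    refine Nat.sSup_mem ⟨0, ∅, by simp, ?_, rfl⟩ ⟨Fintype.card (Finset (Fin n)), ?_⟩
    · intro S hS hc
      rw [Finset.subset_empty.mp hS] at hc
      simp at hc
    · rintro m ⟨K, -, -, rfl⟩
      exact Finset.card_le_univ K
  rw [← hm]
  by_cases h3 : 3 ≤ H.card
  · have h := upper hr H hu (by
      intro A hA B hB C hC hAB hAC hBC
      have h := hS {A, B, C} (by
        intro X hX
        simp only [Finset.mem_insert, Finset.mem_singleton] at hX
        rcases hX with rfl | rfl | rfl <;> assumption) (Finset.card_eq_three.mpr ⟨A, B, C, hAB, hAC, hBC, rfl⟩)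
      have hsup : ({A, B, C} : Finset (Finset (Fin n))).sup id = C ∪ (A ∪ B) := by
        ext x; simp [Finset.sup_insert]; tauto
      rw [hsup] at h
      have e1 := Finset.card_union_add_card_inter A B
      have e2 := Finset.card_union_add_card_inter C (A ∪ B)
      have := hu A hA; have := hu B hB; have := hu C hC
      omega) h3
    rw [Fintype.card_fin] at h
    have e1 : r * (r - 1) = (r ^ 2 - r - 1) + 1 := by
      obtain ⟨k, rfl⟩ : ∃ k, r = k + 3 := ⟨r - 3, by omega⟩
      have : (k + 3) ^ 2 = (k + 3) * (k + 3 - 1) + (k + 3) := by simp; ring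
      have : 0 < (k + 3) * (k + 3 - 1) := by simp
      omega
    rw [e1, add_mul, one_mul] at h
    have : n * (n - 1) ≤ n ^ 2 := by rw [sq]; exact Nat.mul_le_mul_left _ (Nat.sub_le _ _)
    omega
  · have : H.card ≤ 2 := by omega
    nlinarith

end DTD

namespace DTD

theorem exists_density (r : ℕ) (hr : 3 ≤ r) (δ : ℝ) (hδ : 0 < δ) :
    ∃ m : ℕ, 0 < m ∧ ∃ h : ℕ, (1 / ((r ^ 2 - r - 1 : ℕ) : ℝ) - δ) * (m : ℝ) ^ 2 ≤ h ∧
      ∀ k n : ℕ, m * (k * m.factorial + 1) ≤ n →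
        (k * m.factorial + 1) ^ 2 * h ≤ sparseTuranNumber n r (3 * r - 4) 3 := by
  set E := r ^ 2 - r - 1 with hE
  have hE0 : 0 < E := by
    have : r * 3 ≤ r ^ 2 := by nlinarith
    omega
  have hE1 : (0 : ℝ) < E := by exact_mod_cast hE0
  obtain ⟨s, hs⟩ := exists_pow_lt_of_lt_one (half_pos hδ) (by norm_num : (1 / 2 : ℝ) < 1)
  have hs' : (1 / 2 : ℝ) ^ (s + 1) < δ / 2 :=
    lt_of_le_of_lt (pow_le_pow_of_le_one (by norm_num) (by norm_num) (Nat.le_succ s)) hs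
  generalize ht : s + 1 = t at hs'
  have ht0 : 0 < t := by omega
  set M := (2 ^ t - 1) / E with hM
  have h2t : (0:ℕ) < 2 ^ t := by positivity
  have hM1 : M * E + 1 ≤ 2 ^ t := by
    have h1 : M * E ≤ 2 ^ t - 1 := Nat.div_mul_le_self _ _
    generalize M * E = x at *
    omega
  have hM2 : 2 ^ t ≤ M * E + E := by
    have h1 : 2 ^ t - 1 < M * E + E := Nat.lt_div_mul_add hE0
    generalize M * E = x at *
    clear_value E
    omega
  set I := t * Fintype.card (Sym2 (Fin (2 * r - 2))) with hI
  obtain ⟨Q, hQ⟩ := exists_nat_gt ((I : ℝ) / (δ / 2))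
  obtain ⟨q, hqp, hqgt, hqmod⟩ := Nat.exists_prime_gt_modEq_one (k := 4)
    (max Q (2 ^ (2 * r - 2) + 2 * (2 * r - 2) + 1)) (by norm_num)
  have hfact : Fact q.Prime := ⟨hqp⟩
  obtain ⟨H, hH, hHc⟩ := exists_dense r hr t M q ht0 hM1 hqmod
    (lt_of_le_of_lt (le_max_right _ _) hqgt)
  have hq0 : 0 < q := hqp.pos
  have hcV : Fintype.card (Fin t × Sym2 (Fin (2 * r - 2)) → ZMod q) = q ^ I := by
    rw [Fintype.card_fun, ZMod.card, Fintype.card_prod, Fintype.card_fin]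
  refine ⟨q ^ I, by positivity, H.card, ?_, ?_⟩
  · have hqR : (0 : ℝ) < q := by exact_mod_cast hq0
    have hIq : (I : ℝ) / q < δ / 2 := by
      have h1 : (I : ℝ) / (δ / 2) < q := hQ.trans (by exact_mod_cast lt_of_le_of_lt (le_max_left _ _) hqgt)
      rw [div_lt_iff₀ (half_pos hδ)] at h1
      rw [div_lt_iff₀ hqR]; linarith
    rw [← hI] at hHc
    have hHR : (M : ℝ) * ((q : ℝ) - 1) ^ I * (q : ℝ) ^ I ≤ H.card * 2 ^ t := by
      have := (Nat.cast_le (α := ℝ)).mpr hHc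
      push_cast [Nat.cast_sub hqp.one_le] at this
      exact this
    have hbern : 1 - (I : ℝ) / q ≤ (1 - 1 / (q : ℝ)) ^ I := by
      have h1 : (1 : ℝ) / q ≤ 1 := by
        rw [div_le_one hqR]; exact_mod_cast hqp.one_le
      have := one_add_mul_le_pow (a := -(1 / (q : ℝ))) (by linarith) I
      calc 1 - (I : ℝ) / q = 1 + I * -(1 / (q : ℝ)) := by ring
        _ ≤ _ := this
        _ = _ := by rw [← sub_eq_add_neg]
    have hpow : ((q : ℝ) - 1) ^ I = (1 - 1 / (q : ℝ)) ^ I * (q : ℝ) ^ I := by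
      rw [← mul_pow]; congr 1; field_simp
    have h2R : (0 : ℝ) < 2 ^ t := by positivity
    have hMle : (M : ℝ) / 2 ^ t ≤ 1 := by
      rw [div_le_one h2R]
      have : M ≤ 2 ^ t := by nlinarith
      exact_mod_cast this
    have hMge : 1 / (E : ℝ) - δ / 2 ≤ (M : ℝ) / 2 ^ t := by
      have h1 : (2 : ℝ) ^ t ≤ M * E + E := by exact_mod_cast hM2
      have h3 : 1 / (E : ℝ) - (1 / 2) ^ t ≤ (M : ℝ) / 2 ^ t := by
        rw [one_div_pow, sub_le_iff_le_add, ← add_div, div_le_div_iff₀ hE1 h2R]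
        linarith
      linarith
    have hM0 : (0 : ℝ) ≤ (M : ℝ) / 2 ^ t := by positivity
    have hfin : 1 / (E : ℝ) - δ ≤ (M : ℝ) / 2 ^ t * (1 - 1 / (q : ℝ)) ^ I := by
      have h0 : (0 : ℝ) ≤ I / q := by positivity
      calc 1 / (E : ℝ) - δ ≤ (M : ℝ) / 2 ^ t * (1 - I / q) := by nlinarith
        _ ≤ _ := mul_le_mul_of_nonneg_left hbern hM0
    rw [hpow] at hHR
    push_cast
    have hqI : (0 : ℝ) < (q : ℝ) ^ I := by positivity
    calc (1 / (E : ℝ) - δ) * ((q : ℝ) ^ I) ^ 2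
        ≤ ((M : ℝ) / 2 ^ t * (1 - 1 / (q : ℝ)) ^ I) * ((q : ℝ) ^ I) ^ 2 := by gcongr
      _ = (M * ((1 - 1 / (q : ℝ)) ^ I * (q : ℝ) ^ I) * (q : ℝ) ^ I) / 2 ^ t := by ring
      _ ≤ H.card := by rw [div_le_iff₀ h2R]; exact hHR
  · intro k n hn
    obtain ⟨H', h1, h2⟩ := blowup (by omega) H hH (k * (q ^ I).factorial + 1) (by
      intro d hd0 hd
      rw [hcV] at hd
      have hdvd : d ∣ k * (q ^ I).factorial := (Nat.dvd_factorial hd0 hd.le).mul_left k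
      obtain ⟨c, hc⟩ := hdvd
      rw [hc]
      simp)
    rw [← h2]
    refine transfer hr H' h1 n ?_
    rw [Fintype.card_prod, hcV, ZMod.card]
    exact hn

end DTD

/-- For every fixed r ≥ 3, `f_r(n, 3r-4, 3)/n² → 1/(r² - r - 1)`. -/
theorem degenerate_turan_density (r : ℕ) (hr : 3 ≤ r) :
    Tendsto (fun n : ℕ => (sparseTuranNumber n r (3 * r - 4) 3 : ℝ) / n ^ 2)
      atTop (nhds (1 / ((r : ℝ) ^ 2 - r - 1))) := by
  have hge : r + 1 ≤ r ^ 2 := by nlinarith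
  have hcast : ((r : ℝ) ^ 2 - r - 1) = ((r ^ 2 - r - 1 : ℕ) : ℝ) := by
    rw [Nat.sub_sub, Nat.cast_sub hge]; push_cast; ring
  rw [hcast]
  have hE0 : 0 < r ^ 2 - r - 1 := by
    have : r * 3 ≤ r ^ 2 := by nlinarith
    omega
  have hE1 : (0 : ℝ) < ((r ^ 2 - r - 1 : ℕ) : ℝ) := by exact_mod_cast hE0
  have hinv : Tendsto (fun n : ℕ => (1 : ℝ) / n) atTop (nhds 0) := tendsto_one_div_atTop_nhds_zero_nat
  refine tendsto_order.2 ⟨fun a ha => ?_, fun a ha => ?_⟩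
  · obtain ⟨m, hm, h, hh, hf⟩ := DTD.exists_density r hr
      ((1 / ((r ^ 2 - r - 1 : ℕ) : ℝ) - a) / 2) (by linarith)
    have hmR : (0 : ℝ) < m := by exact_mod_cast hm
    set C : ℝ := m.factorial + 1 with hC
    have hlim : Tendsto (fun n : ℕ => (1 / (m : ℝ) - C * (1 / (n : ℝ))) ^ 2 * h) atTop
        (nhds ((1 / (m : ℝ) - C * 0) ^ 2 * h)) :=
      ((tendsto_const_nhds.sub (hinv.const_mul C)).pow 2).mul_const _
    have hlim2 : Tendsto (fun n : ℕ => 1 / (m : ℝ) - C * (1 / (n : ℝ))) atTop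
        (nhds (1 / (m : ℝ) - C * 0)) := tendsto_const_nhds.sub (hinv.const_mul C)
    have hpos : (0 : ℝ) < 1 / (m : ℝ) - C * 0 := by rw [mul_zero, sub_zero]; positivity
    have hlt : a < (1 / (m : ℝ) - C * 0) ^ 2 * h := by
      have e : (1 / (m : ℝ) - C * 0) ^ 2 * h = h / (m : ℝ) ^ 2 := by
        rw [mul_zero, sub_zero]; field_simp
      rw [e, lt_div_iff₀ (by positivity)]
      refine lt_of_lt_of_le ?_ hh
      have : (0 : ℝ) < (m : ℝ) ^ 2 := by positivity
      apply mul_lt_mul_of_pos_right _ this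
      linarith
    filter_upwards [(tendsto_order.1 hlim).1 a hlt, (tendsto_order.1 hlim2).1 0 hpos,
      eventually_ge_atTop (m + 1)] with n h1 h2 hn
    refine lt_of_lt_of_le h1 ?_
    have hn0 : (0 : ℝ) < n := by exact_mod_cast (by omega : 0 < n)
    set k := (n / m - 1) / m.factorial with hk
    have hnm : 1 ≤ n / m := (Nat.one_le_div_iff hm).mpr (by omega)
    have hk1 : k * m.factorial ≤ n / m - 1 := Nat.div_mul_le_self _ _
    have hk2 : n / m - 1 < k * m.factorial + m.factorial := Nat.lt_div_mul_add (Nat.factorial_pos m)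
    have hkn : m * (k * m.factorial + 1) ≤ n :=
      (Nat.mul_le_mul_left m (by omega)).trans (Nat.mul_div_le n m)
    have hb := hf k n hkn
    have hbR : ((k : ℝ) * m.factorial + 1) ^ 2 * h ≤ sparseTuranNumber n r (3 * r - 4) 3 := by
      exact_mod_cast hb
    have hN : (n : ℝ) / m - C ≤ (k : ℝ) * m.factorial + 1 := by
      have h3 : n / m ≤ k * m.factorial + m.factorial := by omega
      have h4 : n < m * (n / m + 1) := Nat.lt_mul_div_succ n hm
      have h5 : n ≤ m * (k * m.factorial + m.factorial + 1) :=
        h4.le.trans (Nat.mul_le_mul_left m (by omega))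
      have h6 : (n : ℝ) ≤ m * (k * m.factorial + m.factorial + 1) := by exact_mod_cast h5
      have h7 : (n : ℝ) / m ≤ k * m.factorial + m.factorial + 1 := by
        rw [div_le_iff₀ hmR]; linarith
      rw [hC]; linarith
    rw [le_div_iff₀ (by positivity)]
    refine le_trans ?_ hbR
    have e : (1 / (m : ℝ) - C * (1 / (n : ℝ))) ^ 2 * h * (n : ℝ) ^ 2 = ((n : ℝ) / m - C) ^ 2 * h := by
      field_simp
    rw [e]
    have h0 : 0 ≤ (n : ℝ) / m - C := by
      have : (n : ℝ) / m - C = (1 / (m : ℝ) - C * (1 / (n : ℝ))) * n := by field_simp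
      rw [this]; exact (mul_pos h2 hn0).le
    gcongr
  · set E := r ^ 2 - r - 1
    have hlim : Tendsto (fun n : ℕ => 1 / (E : ℝ) + 2 / (E : ℝ) * (1 / (n : ℝ)) + 2 * (1 / (n : ℝ)) ^ 2)
        atTop (nhds (1 / (E : ℝ) + 2 / (E : ℝ) * 0 + 2 * 0 ^ 2)) :=
      (tendsto_const_nhds.add (hinv.const_mul _)).add ((hinv.pow 2).const_mul _)
    have hlt : 1 / (E : ℝ) + 2 / (E : ℝ) * 0 + 2 * 0 ^ 2 < a := by simpa using ha
    filter_upwards [(tendsto_order.1 hlim).2 a hlt, eventually_ge_atTop 1] with n h1 hn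
    refine lt_of_le_of_lt ?_ h1
    have hn0 : (0 : ℝ) < n := by exact_mod_cast hn
    have hb : (E : ℝ) * sparseTuranNumber n r (3 * r - 4) 3 ≤ (n : ℝ) ^ 2 + 2 * n + 2 * E := by
      exact_mod_cast DTD.upper_sparse n r hr
    rw [div_le_iff₀ (by positivity)]
    have e : (1 / (E : ℝ) + 2 / (E : ℝ) * (1 / (n : ℝ)) + 2 * (1 / (n : ℝ)) ^ 2) * (n : ℝ) ^ 2
        = ((n : ℝ) ^ 2 + 2 * n + 2 * E) / E := by
      field_simp
    rw [e, le_div_iff₀ hE1, mul_comm]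
    exact hb
end
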